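/- arXiv:2108.06642 — 3 statements merged into one kernel-verified Lean document; each statement's English description precedes it below -/
import Mathlib

section
/- Let R be an Iwanaga-Gorenstein ring. Then ((P(R), R-Mod), (GP(R), P(R)^)) is a Hovey twin cotorsion pair on R-Mod, where P(R)^ is the class of left R-modules of finite projective dimension; that is, (P(R), R-Mod) and (GP(R), P(R)^) are cotorsion pairs on R-Mod, Ext^1_R(P, M) = 0 for every projective module P and every M ∈ P(R)^, and Cone(P(R)^, P(R)) = CoCone(P(R)^, P(R)). -/
/-!
Let `R` be Iwanaga-Gorenstein, of left and right self-injective dimensions `n` and `m`. Everything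
rests on one bound (`exists_dimension_bound`): there is a `d` such that injective left modules have
projective dimension at most `d` and projective left modules have injective dimension at most `d`.

*The bound.* For `E` injective and finitely generated right modules, `Tor (-, E)` is dual to
`Ext (-, R)`, so it vanishes in degrees above `m`, and the `m`-th syzygy of `E` is flat. Flatness is
expressed by the exactness of systems of linear equations (`TensorExact`), with exact sequences of
finite free right modules written as matrices over `Rᵐᵒᵖ`. A map from a finitely generated module to
a flat module `F` factors through a finite free module (`TensorExact.finFactor`), so every class in
`Extʲ(M, F)` with `M` finitely generated comes from some `Extʲ(M, Rᵏ)`; hence `Extⁿ⁺¹(M, F) = 0`,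
and `F` has injective dimension at most `n` by Baer's criterion
(`FinFactor.hasInjectiveDimensionLT`). This applies to projective modules. It also applies to all
syzygies of the flat module `N = Ωᵐ E`, so `Extⁿ⁺¹(N, Ωⁿ⁺¹ N) = Ext¹(Ωⁿ N, Ωⁿ⁺¹ N)` vanishes,
`Ωⁿ N` is projective, and `E` has projective dimension at most `m + n`.

*The cotorsion pair.* Let `PerpProj` be the class of `G` with `Extⁱ(G, P) = 0` for all projective `P`
and `i ≥ 1`. By the bound it contains all `d`-th syzygies, and a descending induction on the order
of syzygies (`Syzygy.hasCores`) embeds every module into one of finite projective dimension with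
cokernel in `PerpProj`; a pushout along a projective cover (`HasCores.res`) gives the other
approximation. Iterating these embeddings and projective covers shows that `PerpProj` is the class
of Gorenstein projectives (`GClass.perpProj`, `PerpProj.gClass`), and `Ext¹(G, V) = 0` for `V` of
finite projective dimension follows by induction along a resolution.

*The Hovey condition.* Both `Cone` and `CoCone` of the modules of finite projective dimension with
the projectives are the class of modules of finite projective dimension.
-/

open CategoryTheory CategoryTheory.Limits CategoryTheory.Abelian ZeroObject

universe w v u

namespace FrobeniusPaper

variable {C : Type u} [Category.{v} C] [Abelian C]

/-- `f, g` form a short exact sequence `0 → A → B → D → 0` in the abelian category `C`. -/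
def IsSES {A B D : C} (f : A ⟶ B) (g : B ⟶ D) : Prop :=
  ∃ w : f ≫ g = 0, (ShortComplex.mk f g w).ShortExact

/-- A "subcategory" in the sense of the paper: a full additive subcategory, regarded as the
predicate of membership for its objects, closed under isomorphisms and direct summands. -/
structure IsSubcat (X : C → Prop) : Prop where
  zero : X 0
  iso_closed : ∀ {A B : C}, (A ≅ B) → X A → X B
  biprod_closed : ∀ {A B : C}, X A → X B → X (A ⊞ B)
  summand_closed : ∀ {A M : C} (i : A ⟶ M) (p : M ⟶ A), i ≫ p = 𝟙 A → X M → X A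

/-- `Hat X n M` means `M ∈ X̂ₙ`, i.e. there is an exact sequence
`0 → Xₙ → ⋯ → X₁ → X₀ → M → 0` with all `Xᵢ ∈ X`. -/
def Hat (X : C → Prop) : ℕ → C → Prop
  | 0, M => X M
  | (n + 1), M => ∃ (K E : C) (f : K ⟶ E) (g : E ⟶ M), IsSES f g ∧ X E ∧ Hat X n K

/-- `M ∈ X̂ = ⋃ₙ X̂ₙ`. -/
def HatAll (X : C → Prop) (M : C) : Prop := ∃ n, Hat X n M

/-- `W` is a cogenerator for `X`. -/
def IsCogenerator (W X : C → Prop) : Prop :=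
  (∀ M, W M → X M) ∧
    ∀ M, X M → ∃ (W₀ X' : C) (f : M ⟶ W₀) (g : W₀ ⟶ X'), IsSES f g ∧ W W₀ ∧ X X'

/-- `W` is a generator for `X`. -/
def IsGenerator (W X : C → Prop) : Prop :=
  (∀ M, W M → X M) ∧
    ∀ M, X M → ∃ (X' W₀ : C) (f : X' ⟶ W₀) (g : W₀ ⟶ M), IsSES f g ∧ W W₀ ∧ X X'

/-- `X` is closed under extensions. -/
def ExtClosed (X : C → Prop) : Prop :=
  ∀ ⦃A B D : C⦄ (f : A ⟶ B) (g : B ⟶ D), IsSES f g → X A → X D → X B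

/-- `X` is closed under kernels of epimorphisms. -/
def KerEpiClosed (X : C → Prop) : Prop :=
  ∀ ⦃A B D : C⦄ (f : A ⟶ B) (g : B ⟶ D), IsSES f g → X B → X D → X A

/-- A thick subcategory: closed under direct summands and two-out-of-three for
short exact sequences. -/
def IsThickSub (T : C → Prop) : Prop :=
  IsSubcat T ∧ ∀ ⦃A B D : C⦄ (f : A ⟶ B) (g : B ⟶ D), IsSES f g →
    (T A → T B → T D) ∧ (T A → T D → T B) ∧ (T B → T D → T A)

/-- Membership in `Thick(X)`, the smallest thick subcategory containing `X`. -/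
def thickClosure (X : C → Prop) (M : C) : Prop :=
  ∀ T : C → Prop, IsThickSub T → (∀ N, X N → T N) → T M

variable [HasExt.{w} C]

/-- `Y ∈ X^⊥`, i.e. `Extⁱ(M, Y) = 0` for all `i ≥ 1` and `M ∈ X`. -/
def rightPerp (X : C → Prop) (Y : C) : Prop :=
  ∀ M, X M → ∀ i : ℕ, 1 ≤ i → Subsingleton (Abelian.Ext M Y i)

/-- A left Frobenius pair `(X, W)`. -/
structure LeftFrobenius (X W : C → Prop) : Prop where
  subX : IsSubcat X
  subW : IsSubcat W
  extClosed : ExtClosed X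
  kerEpiClosed : KerEpiClosed X
  cogen : IsCogenerator W X
  perp : ∀ M, W M → rightPerp X M

/-- A strong left Frobenius pair `(X, W)`. -/
structure StrongLeftFrobenius (X W : C → Prop) extends LeftFrobenius X W : Prop where
  gen : IsGenerator W X
  proj : ∀ M N, W M → X N → ∀ i : ℕ, 1 ≤ i → Subsingleton (Abelian.Ext M N i)

/-- A cotorsion pair `(U, V)` on an extension-closed subcategory `B` of `C`. -/
structure CotorsionPairOn (B U V : C → Prop) : Prop where
  subU : ∀ M, U M → B M
  subV : ∀ M, V M → B M
  isoU : ∀ {A B' : C}, (A ≅ B') → U A → U B'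
  summandU : ∀ {A M : C} (i : A ⟶ M) (p : M ⟶ A), i ≫ p = 𝟙 A → U M → U A
  isoV : ∀ {A B' : C}, (A ≅ B') → V A → V B'
  summandV : ∀ {A M : C} (i : A ⟶ M) (p : M ⟶ A), i ≫ p = 𝟙 A → V M → V A
  ext1 : ∀ M N, U M → V N → Subsingleton (Abelian.Ext M N 1)
  res : ∀ M, B M → ∃ (V₀ U₀ : C) (f : V₀ ⟶ U₀) (g : U₀ ⟶ M), IsSES f g ∧ U U₀ ∧ V V₀
  cores : ∀ M, B M → ∃ (V₀ U₀ : C) (f : M ⟶ V₀) (g : V₀ ⟶ U₀), IsSES f g ∧ U U₀ ∧ V V₀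

/-- `GClass X W M`: there exists a doubly infinite exact sequence
`⋯ → P₋₁ → P₀ → P₁ → ⋯` with all terms in `X`, with `M ≅ Ker(P₀ → P₁)`, and such that the
complex `Hom(P, Q)` is exact for every `Q ∈ W`. -/
def GClass (X W : C → Prop) (M : C) : Prop :=
  ∃ (P : ℤ → C) (d : ∀ n : ℤ, P n ⟶ P (n + 1)) (hd : ∀ n, d n ≫ d (n + 1) = 0),
    (∀ n, X (P n)) ∧
    (∀ n, (ShortComplex.mk (d n) (d (n + 1)) (hd n)).Exact) ∧
    Nonempty (M ≅ kernel (d 0)) ∧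
    (∀ Q : C, W Q → ∀ (n : ℤ) (ψ : P (n + 1) ⟶ Q), d n ≫ ψ = 0 →
      ∃ φ : P (n + 1 + 1) ⟶ Q, d (n + 1) ≫ φ = ψ)

/-- `Cone(V, S)`: objects `M` admitting a short exact sequence `0 → V₀ → S₀ → M → 0` with
`V₀ ∈ V` and `S₀ ∈ S`. -/
def ConeCls (V S : C → Prop) (M : C) : Prop :=
  ∃ (V₀ S₀ : C) (f : V₀ ⟶ S₀) (g : S₀ ⟶ M), IsSES f g ∧ V V₀ ∧ S S₀

/-- `CoCone(V, S)`: objects `M` admitting a short exact sequence `0 → M → V₀ → S₀ → 0` with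
`V₀ ∈ V` and `S₀ ∈ S`. -/
def CoConeCls (V S : C → Prop) (M : C) : Prop :=
  ∃ (V₀ S₀ : C) (f : M ⟶ V₀) (g : V₀ ⟶ S₀), IsSES f g ∧ V V₀ ∧ S S₀

/-- `CoHat I n M` : `M` admits a coresolution `0 → M → I₀ → ⋯ → Iₙ → 0` with all `Iⱼ ∈ I`;
in particular `∃ n, CoHat I n M` with `I` the injectives says `M` has finite injective
dimension. -/
def CoHat (I : C → Prop) : ℕ → C → Prop
  | 0, M => I M
  | (n + 1), M => ∃ (E K : C) (f : M ⟶ E) (g : E ⟶ K), IsSES f g ∧ I E ∧ CoHat I n K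

end FrobeniusPaper

namespace FrobeniusPaper

section Abstract

variable {C : Type u} [Category.{v} C] [Abelian C]

/-! ### Short exact sequences -/

theorem isSES_of_kernel {A B D : C} {f : A ⟶ B} {g : B ⟶ D} (hf : Mono f) (hg : Epi g)
    (w : f ≫ g = 0) (h : ∀ (T : C) (t : T ⟶ B), t ≫ g = 0 → ∃ s : T ⟶ A, s ≫ f = t) :
    IsSES f g := by
  refine ⟨w, ?_⟩
  have : (ShortComplex.mk f g w).Exact := by
    refine ShortComplex.exact_of_f_is_kernel _ ?_
    exact KernelFork.IsLimit.ofι' _ _ (fun {T} t ht => ⟨(h T t ht).choose, (h T t ht).choose_spec⟩)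
  exact ShortComplex.ShortExact.mk' this hf hg

theorem isSES_of_cokernel {A B D : C} {f : A ⟶ B} {g : B ⟶ D} (hf : Mono f) (hg : Epi g)
    (w : f ≫ g = 0) (h : ∀ (T : C) (t : B ⟶ T), f ≫ t = 0 → ∃ s : D ⟶ T, g ≫ s = t) :
    IsSES f g := by
  refine ⟨w, ?_⟩
  have : (ShortComplex.mk f g w).Exact := by
    refine ShortComplex.exact_of_g_is_cokernel _ ?_
    exact CokernelCofork.IsColimit.ofπ' _ _
      (fun {T} t ht => ⟨(h T t ht).choose, (h T t ht).choose_spec⟩)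
  exact ShortComplex.ShortExact.mk' this hf hg

section
variable {A B D : C} {f : A ⟶ B} {g : B ⟶ D}

theorem IsSES.mono (h : IsSES f g) : Mono f := h.2.mono_f
theorem IsSES.epi (h : IsSES f g) : Epi g := h.2.epi_g

theorem IsSES.lift (h : IsSES f g) {T : C} (t : T ⟶ B) (ht : t ≫ g = 0) :
    ∃ s : T ⟶ A, s ≫ f = t := by
  have := h.mono
  exact ⟨h.2.exact.lift t ht, h.2.exact.lift_f t ht⟩

theorem IsSES.desc (h : IsSES f g) {T : C} (t : B ⟶ T) (ht : f ≫ t = 0) :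
    ∃ s : D ⟶ T, g ≫ s = t := by
  have := h.epi
  exact ⟨h.2.exact.desc t ht, h.2.exact.g_desc t ht⟩

end

theorem isSES_kernel {B D : C} (g : B ⟶ D) [Epi g] : IsSES (kernel.ι g) g :=
  ⟨kernel.condition g, { exact := ShortComplex.exact_kernel g }⟩

theorem isSES_cokernel {A B : C} (f : A ⟶ B) [Mono f] : IsSES f (cokernel.π f) :=
  ⟨cokernel.condition f, { exact := ShortComplex.exact_cokernel f }⟩

theorem isSES_id_zero (M : C) : IsSES (𝟙 M) (0 : M ⟶ 0) :=
  isSES_of_kernel inferInstance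
    ((isZero_zero C).epi _) comp_zero
    (fun _ t _ => ⟨t, Category.comp_id t⟩)

/-- Pulling back a short exact sequence along an epimorphism. -/
theorem exists_pullback {A B D K E : C} {f : A ⟶ B} {g : B ⟶ D} {k : K ⟶ E} {e : E ⟶ D}
    (h : IsSES f g) (h' : IsSES k e) :
    ∃ (W : C) (i : A ⟶ W) (p : W ⟶ E) (j : K ⟶ W) (q : W ⟶ B), IsSES i p ∧ IsSES j q := by
  have := h.epi; have := h.mono; have := h'.epi; have := h'.mono
  have wi : f ≫ g = (0 : A ⟶ E) ≫ e := by rw [h.1, zero_comp]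
  have wj : (0 : K ⟶ B) ≫ g = k ≫ e := by rw [h'.1, zero_comp]
  refine ⟨pullback g e, pullback.lift f 0 wi, pullback.snd g e, pullback.lift 0 k wj,
    pullback.fst g e, ?_, ?_⟩
  · refine isSES_of_kernel ?_ inferInstance (pullback.lift_snd _ _ _) ?_
    · have : Mono (pullback.lift f 0 wi ≫ pullback.fst g e) := by
        rw [pullback.lift_fst]; infer_instance
      exact mono_of_mono _ (pullback.fst g e)
    · intro T t ht
      obtain ⟨s, hs⟩ := h.lift (t ≫ pullback.fst g e)
        (by rw [Category.assoc, pullback.condition, reassoc_of% ht, zero_comp])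
      exact ⟨s, by
        apply pullback.hom_ext
        · rw [Category.assoc, pullback.lift_fst, hs]
        · rw [Category.assoc, pullback.lift_snd, comp_zero, ht]⟩
  · refine isSES_of_kernel ?_ inferInstance (pullback.lift_fst _ _ _) ?_
    · have : Mono (pullback.lift 0 k wj ≫ pullback.snd g e) := by
        rw [pullback.lift_snd]; infer_instance
      exact mono_of_mono _ (pullback.snd g e)
    · intro T t ht
      obtain ⟨s, hs⟩ := h'.lift (t ≫ pullback.snd g e)
        (by rw [Category.assoc, ← pullback.condition, reassoc_of% ht, zero_comp])
      exact ⟨s, by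
        apply pullback.hom_ext
        · rw [Category.assoc, pullback.lift_fst, comp_zero, ht]
        · rw [Category.assoc, pullback.lift_snd, hs]⟩

/-- Pushing out a short exact sequence along a monomorphism. -/
theorem exists_pushout {A B D B' D' : C} {f : A ⟶ B} {g : B ⟶ D} {f' : A ⟶ B'} {g' : B' ⟶ D'}
    (h : IsSES f g) (h' : IsSES f' g') :
    ∃ (W : C) (i : B ⟶ W) (p : W ⟶ D') (j : B' ⟶ W) (q : W ⟶ D), IsSES i p ∧ IsSES j q := by
  have := h.epi; have := h.mono; have := h'.epi; have := h'.mono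
  have wp : f ≫ (0 : B ⟶ D') = f' ≫ g' := by rw [h'.1, comp_zero]
  have wq : f ≫ g = f' ≫ (0 : B' ⟶ D) := by rw [h.1, comp_zero]
  refine ⟨pushout f f', pushout.inl f f', pushout.desc 0 g' wp, pushout.inr f f',
    pushout.desc g 0 wq, ?_, ?_⟩
  · refine isSES_of_cokernel inferInstance ?_ (pushout.inl_desc _ _ _) ?_
    · have : Epi (pushout.inr f f' ≫ pushout.desc 0 g' wp) := by
        rw [pushout.inr_desc]; infer_instance
      exact epi_of_epi (pushout.inr f f') _
    · intro T t ht
      obtain ⟨s, hs⟩ := h'.desc (pushout.inr f f' ≫ t)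
        (by rw [← Category.assoc, ← pushout.condition, Category.assoc, ht, comp_zero])
      exact ⟨s, by
        apply pushout.hom_ext
        · rw [pushout.inl_desc_assoc, zero_comp, ht]
        · rw [pushout.inr_desc_assoc, hs]⟩
  · refine isSES_of_cokernel inferInstance ?_ (pushout.inr_desc _ _ _) ?_
    · have : Epi (pushout.inl f f' ≫ pushout.desc g 0 wq) := by
        rw [pushout.inl_desc]; infer_instance
      exact epi_of_epi (pushout.inl f f') _
    · intro T t ht
      obtain ⟨s, hs⟩ := h.desc (pushout.inl f f' ≫ t)
        (by rw [← Category.assoc, pushout.condition, Category.assoc, ht, comp_zero])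
      exact ⟨s, by
        apply pushout.hom_ext
        · rw [pushout.inl_desc_assoc, hs]
        · rw [pushout.inr_desc_assoc, zero_comp, ht]⟩

/-- If `0 → N → B → N' → 0` is exact and `Q ↠ B` has kernel `B₁`, then the kernel `K` of the
composite `Q ↠ N'` is an extension of `N` by `B₁`. -/
theorem exists_kernel_comp {N B N' B₁ Q : C} {f : N ⟶ B} {g : B ⟶ N'} {k : B₁ ⟶ Q} {e : Q ⟶ B}
    (h : IsSES f g) (h' : IsSES k e) :
    ∃ (K : C) (i : K ⟶ Q) (j : B₁ ⟶ K) (p : K ⟶ N), IsSES i (e ≫ g) ∧ IsSES j p := by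
  have := h.epi; have := h.mono; have := h'.epi; have := h'.mono
  have wj : (0 : B₁ ⟶ N) ≫ f = k ≫ e := by rw [h'.1, zero_comp]
  refine ⟨pullback f e, pullback.snd f e, pullback.lift 0 k wj, pullback.fst f e, ?_, ?_⟩
  · refine isSES_of_kernel inferInstance (epi_comp _ _)
      (by rw [← Category.assoc, ← pullback.condition, Category.assoc, h.1, comp_zero]) ?_
    intro T t ht
    obtain ⟨s, hs⟩ := h.lift (t ≫ e) (by rw [Category.assoc, ht])
    exact ⟨pullback.lift s t hs, pullback.lift_snd _ _ _⟩
  · refine isSES_of_kernel ?_ inferInstance (pullback.lift_fst _ _ _) ?_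
    · have : Mono (pullback.lift 0 k wj ≫ pullback.snd f e) := by
        rw [pullback.lift_snd]; infer_instance
      exact mono_of_mono _ (pullback.snd f e)
    · intro T t ht
      obtain ⟨s, hs⟩ := h'.lift (t ≫ pullback.snd f e)
        (by rw [Category.assoc, ← pullback.condition, reassoc_of% ht, zero_comp])
      exact ⟨s, by
        apply pullback.hom_ext
        · rw [Category.assoc, pullback.lift_fst, comp_zero, ht]
        · rw [Category.assoc, pullback.lift_snd, hs]⟩

theorem exists_projective_cover [EnoughProjectives C] (M : C) :
    ∃ (K P : C) (f : K ⟶ P) (g : P ⟶ M), IsSES f g ∧ Projective P :=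
  ⟨kernel (Projective.π M), Projective.over M, kernel.ι _, Projective.π M, isSES_kernel _,
    inferInstance⟩

/-! ### Finite projective dimension -/

theorem hasProjectiveDimensionLT_of_hat {n : ℕ} {M : C}
    (h : Hat (fun P : C => Projective P) n M) : HasProjectiveDimensionLT M (n + 1) := by
  induction n generalizing M with
  | zero => exact projective_iff_hasProjectiveDimensionLT_one.1 h
  | succ n ih =>
    obtain ⟨K, E, f, g, hs, hE, hK⟩ := h
    have hE : Projective E := hE
    exact (hs.2.hasProjectiveDimensionLT_X₃_iff n hE).2 (ih hK)

theorem hat_of_hasProjectiveDimensionLT [EnoughProjectives C] {n : ℕ} {M : C}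
    (h : HasProjectiveDimensionLT M (n + 1)) : Hat (fun P : C => Projective P) n M := by
  induction n generalizing M with
  | zero => exact projective_iff_hasProjectiveDimensionLT_one.2 h
  | succ n ih =>
    obtain ⟨K, P, f, g, hs, hP⟩ := exists_projective_cover M
    exact ⟨K, P, f, g, hs, hP, ih ((hs.2.hasProjectiveDimensionLT_X₃_iff n hP).1 h)⟩

theorem hatAll_iff [EnoughProjectives C] {M : C} :
    HatAll (fun P : C => Projective P) M ↔ ∃ n, HasProjectiveDimensionLT M n := by
  constructor
  · rintro ⟨n, h⟩
    exact ⟨_, hasProjectiveDimensionLT_of_hat h⟩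
  · rintro ⟨n, h⟩
    exact ⟨n, hat_of_hasProjectiveDimensionLT (hasProjectiveDimensionLT_of_ge M n _ (by lia))⟩

theorem finPd_ext {A B D : C} {f : A ⟶ B} {g : B ⟶ D} (h : IsSES f g)
    (hA : ∃ n, HasProjectiveDimensionLT A n) (hD : ∃ n, HasProjectiveDimensionLT D n) :
    ∃ n, HasProjectiveDimensionLT B n := by
  obtain ⟨n, hA⟩ := hA
  obtain ⟨m, hD⟩ := hD
  exact ⟨n + m, h.2.hasProjectiveDimensionLT_X₂ _ (hasProjectiveDimensionLT_of_ge A n _ (by lia))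
    (hasProjectiveDimensionLT_of_ge D m _ (by lia))⟩

theorem finPd_coker {A B D : C} {f : A ⟶ B} {g : B ⟶ D} (h : IsSES f g)
    (hA : ∃ n, HasProjectiveDimensionLT A n) (hB : ∃ n, HasProjectiveDimensionLT B n) :
    ∃ n, HasProjectiveDimensionLT D n := by
  obtain ⟨n, hA⟩ := hA
  obtain ⟨m, hB⟩ := hB
  exact ⟨n + m + 1, h.2.hasProjectiveDimensionLT_X₃ _
    (hasProjectiveDimensionLT_of_ge A n _ (by lia))
    (hasProjectiveDimensionLT_of_ge B m _ (by lia))⟩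

theorem finPd_ker {A B D : C} {f : A ⟶ B} {g : B ⟶ D} (h : IsSES f g)
    (hB : ∃ n, HasProjectiveDimensionLT B n) (hD : ∃ n, HasProjectiveDimensionLT D n) :
    ∃ n, HasProjectiveDimensionLT A n := by
  obtain ⟨n, hB⟩ := hB
  obtain ⟨m, hD⟩ := hD
  exact ⟨n + m, h.2.hasProjectiveDimensionLT_X₁ _ (hasProjectiveDimensionLT_of_ge B n _ (by lia))
    (hasProjectiveDimensionLT_of_ge D m _ (by lia))⟩

/-! ### Syzygies -/

/-- `Syzygy k K`: `K` is a `k`-th syzygy of some object. -/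
def Syzygy : ℕ → C → Prop
  | 0, _ => True
  | (k + 1), K => ∃ (P N : C) (f : K ⟶ P) (g : P ⟶ N), IsSES f g ∧ Projective P ∧ Syzygy k N

/-- If injectives have projective dimension at most `d`, a `k`-th syzygy with `k ≤ d` embeds into
an object of projective dimension at most `d - k` with a `k`-th syzygy as cokernel: resolve an
embedding of the `0`-th syzygy into an injective, as in the horseshoe lemma. -/
theorem Syzygy.exists_embedding [EnoughProjectives C] [EnoughInjectives C] {d : ℕ}
    (hI : ∀ E : C, Injective E → HasProjectiveDimensionLT E (d + 1))
    {k j : ℕ} (hkj : j + k = d) {K : C} (hK : Syzygy k K) :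
    ∃ (B K' : C) (f : K ⟶ B) (g : B ⟶ K'), IsSES f g ∧ Syzygy k K' ∧
      HasProjectiveDimensionLT B (j + 1) := by
  induction k generalizing K j with
  | zero =>
    exact ⟨Injective.under K, cokernel (Injective.ι K), Injective.ι K, cokernel.π _,
      isSES_cokernel _, trivial, by obtain rfl : j = d := hkj; exact hI _ inferInstance⟩
  | succ k ih =>
    obtain ⟨P, N, f, g, hs, hP, hN⟩ := hK
    obtain ⟨B, N', f₁, g₁, hs₁, hN', hB⟩ := ih (j := j + 1) (by lia) hN
    obtain ⟨B₁, Q, f₂, g₂, hs₂, hQ⟩ := exists_projective_cover B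
    obtain ⟨K', a, b, c, hK', hB₁⟩ := exists_kernel_comp hs₁ hs₂
    -- The pullback of `K' ↠ N ↞ P` is an extension of `P` by the syzygy `B₁` of `B`.
    obtain ⟨W, i, p, r, q, hW, hW'⟩ := exists_pullback hB₁ hs
    exact ⟨W, K', r, q, hW', ⟨Q, N', a, _, hK', hQ, hN'⟩,
      hW.2.hasProjectiveDimensionLT_X₂ _ ((hs₂.2.hasProjectiveDimensionLT_X₃_iff j hQ).1 hB)
        (hasProjectiveDimensionLT_of_ge P 1 _ (by lia))⟩

variable [HasExt.{w} C]

/-! ### Objects without extensions by projectives -/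

/-- `M` lies in the left Ext-orthogonal of the projectives: `Extⁱ(M, P) = 0` for all projective
`P` and all `i ≥ 1`. -/
def PerpProj (M : C) : Prop :=
  ∀ P : C, Projective P → ∀ i : ℕ, Subsingleton (Abelian.Ext M P (i + 1))

section
variable {A B D : C} {f : A ⟶ B} {g : B ⟶ D}

theorem ext_subsingleton_mid (h : IsSES f g) {Y : C} {i : ℕ}
    (hA : Subsingleton (Abelian.Ext A Y i)) (hD : Subsingleton (Abelian.Ext D Y i)) :
    Subsingleton (Abelian.Ext B Y i) := by
  refine subsingleton_of_forall_eq 0 fun x => ?_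
  obtain ⟨y, rfl⟩ := Ext.contravariant_sequence_exact₂ h.2 _ x (hA.elim _ _)
  rw [hD.elim y 0, Ext.comp_zero]

theorem ext_subsingleton_left (h : IsSES f g) {Y : C} {i : ℕ}
    (hB : Subsingleton (Abelian.Ext B Y i)) (hD : Subsingleton (Abelian.Ext D Y (i + 1))) :
    Subsingleton (Abelian.Ext A Y i) := by
  refine subsingleton_of_forall_eq 0 fun x => ?_
  obtain ⟨y, rfl⟩ := Ext.contravariant_sequence_exact₁ h.2 _ x (add_comm 1 i) (hD.elim _ _)
  rw [hB.elim y 0, Ext.comp_zero]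

theorem ext_subsingleton_right (h : IsSES f g) {Y : C} {i : ℕ}
    (hA : Subsingleton (Abelian.Ext A Y i)) (hB : Subsingleton (Abelian.Ext B Y (i + 1))) :
    Subsingleton (Abelian.Ext D Y (i + 1)) := by
  refine subsingleton_of_forall_eq 0 fun x => ?_
  obtain ⟨y, rfl⟩ := Ext.contravariant_sequence_exact₃ h.2 _ x (hB.elim _ _) (add_comm 1 i)
  rw [hA.elim y 0, Ext.comp_zero]

theorem ext_subsingleton_coker (h : IsSES f g) {X : C} {i : ℕ}
    (hB : Subsingleton (Abelian.Ext X B i)) (hA : Subsingleton (Abelian.Ext X A (i + 1))) :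
    Subsingleton (Abelian.Ext X D i) := by
  refine subsingleton_of_forall_eq 0 fun x => ?_
  obtain ⟨y, rfl⟩ := Ext.covariant_sequence_exact₃ _ h.2 x rfl (hA.elim _ _)
  rw [hB.elim y 0, Ext.zero_comp]

theorem PerpProj.ext (h : IsSES f g) (hA : PerpProj A) (hD : PerpProj D) : PerpProj B :=
  fun P hP i => ext_subsingleton_mid h (hA P hP i) (hD P hP i)

theorem PerpProj.ker (h : IsSES f g) (hB : PerpProj B) (hD : PerpProj D) : PerpProj A :=
  fun P hP i => ext_subsingleton_left h (hB P hP i) (hD P hP (i + 1))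

end

theorem PerpProj.of_projective {P : C} (hP : Projective P) : PerpProj P :=
  fun _ _ i => HasProjectiveDimensionLT.subsingleton P 1 (i + 1) (by lia) _

theorem PerpProj.retract {A M : C} (i : A ⟶ M) (p : M ⟶ A) (h : i ≫ p = 𝟙 A)
    (hM : PerpProj M) : PerpProj A := by
  intro P hP n
  refine subsingleton_of_forall_eq 0 fun x => ?_
  rw [← x.mk₀_id_comp, ← h, ← Ext.mk₀_comp_mk₀, Ext.comp_assoc_of_second_deg_zero,
    (hM P hP n).elim ((Ext.mk₀ p).comp x (zero_add _)) 0, Ext.comp_zero]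

theorem PerpProj.hat {M : C} (hM : PerpProj M) {n : ℕ} {V : C}
    (hV : Hat (fun P : C => Projective P) n V) (i : ℕ) :
    Subsingleton (Abelian.Ext M V (i + 1)) := by
  induction n generalizing V i with
  | zero => exact hM V hV i
  | succ n ih =>
    obtain ⟨K, E, f, g, hs, hE, hK⟩ := hV
    exact ext_subsingleton_coker hs (hM E hE i) (ih hK (i + 1))

/-- If `Ext¹` of `D` by its syzygy `A` vanishes, the projective cover splits. -/
theorem projective_of_ext_ker {A B D : C} {f : A ⟶ B} {g : B ⟶ D} (h : IsSES f g)
    (hB : Projective B) (hE : Subsingleton (Abelian.Ext D A 1)) : Projective D := by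
  obtain ⟨x, hx⟩ := Ext.covariant_sequence_exact₃ D h.2 (Ext.mk₀ (𝟙 D)) (zero_add 1)
    (hE.elim _ _)
  obtain ⟨s, rfl⟩ := Ext.homEquiv₀.symm.surjective x
  have hs : s ≫ g = 𝟙 D := Ext.homEquiv₀.symm.injective (by simpa using hx)
  exact (Retract.mk s g hs).projective

theorem PerpProj.projective [EnoughProjectives C] {M : C} (hM : PerpProj M)
    (hf : ∃ n, HasProjectiveDimensionLT M n) : Projective M := by
  obtain ⟨K, P, f, g, hs, hP⟩ := exists_projective_cover M
  obtain ⟨n, hK⟩ := hatAll_iff.2 (finPd_ker hs ⟨1, inferInstance⟩ hf)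
  exact projective_of_ext_ker hs hP (hM.hat hK 0)

/-! ### Approximations -/

theorem Syzygy.ext {d : ℕ} (hP : ∀ P : C, Projective P → HasInjectiveDimensionLT P (d + 1))
    {k : ℕ} {K : C} (hK : Syzygy k K) {P : C} (hPP : Projective P) (i : ℕ) (hi : d ≤ i + k) :
    Subsingleton (Abelian.Ext K P (i + 1)) := by
  induction k generalizing K i with
  | zero =>
    have := hP P hPP
    exact HasInjectiveDimensionLT.subsingleton P (d + 1) (i + 1) (by lia) _
  | succ k ih =>
    obtain ⟨Q, N, f, g, hs, hQ, hN⟩ := hK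
    exact ext_subsingleton_left hs (PerpProj.of_projective hQ P hPP i) (ih hN (i + 1) (by lia))

theorem Syzygy.perpProj {d : ℕ} (hP : ∀ P : C, Projective P → HasInjectiveDimensionLT P (d + 1))
    {K : C} (hK : Syzygy d K) : PerpProj K :=
  fun _ hPP i => hK.ext hP hPP i (by lia)

/-- `M` embeds into an object of finite projective dimension with cokernel in the left
orthogonal of the projectives. -/
def HasCores (M : C) : Prop :=
  ∃ (V G : C) (f : M ⟶ V) (g : V ⟶ G), IsSES f g ∧ (∃ n, HasProjectiveDimensionLT V n) ∧
    PerpProj G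

/-- Salce's trick: a coresolution of a syzygy of `M` yields a resolution of `M`. -/
theorem HasCores.res {K P M : C} {f : K ⟶ P} {g : P ⟶ M} (hs : IsSES f g) (hP : Projective P)
    (hK : HasCores K) : ∃ (V G : C) (f : V ⟶ G) (g : G ⟶ M), IsSES f g ∧ PerpProj G ∧
      ∃ n, HasProjectiveDimensionLT V n := by
  obtain ⟨V, G, a, b, hab, hV, hG⟩ := hK
  obtain ⟨W, i, p, j, q, h₁, h₂⟩ := exists_pushout hs hab
  exact ⟨V, W, j, q, h₂, (PerpProj.of_projective hP).ext h₁ hG, hV⟩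

/-- Descending induction on the order `k` of the syzygy. A `d`-th syzygy is handled by
`Syzygy.exists_embedding`, since `d`-th syzygies lie in the orthogonal of the projectives. For
`k < d`, embed `K` into `B` of finite projective dimension with cokernel a `k`-th syzygy `K'`,
approximate `K'` through its own syzygy, and pull back. -/
theorem Syzygy.hasCores [EnoughProjectives C] [EnoughInjectives C] {d : ℕ}
    (hI : ∀ E : C, Injective E → HasProjectiveDimensionLT E (d + 1))
    (hP : ∀ P : C, Projective P → HasInjectiveDimensionLT P (d + 1))
    {k j : ℕ} (hkj : j + k = d) {K : C} (hK : Syzygy k K) : HasCores K := by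
  induction j generalizing k K with
  | zero =>
    obtain rfl : k = d := by lia
    obtain ⟨B, K', f, g, hs, hK', hB⟩ := hK.exists_embedding hI (Nat.zero_add k)
    exact ⟨B, K', f, g, hs, ⟨_, hB⟩, hK'.perpProj hP⟩
  | succ j ih =>
    obtain ⟨B, K', f, g, hs, hK', hB⟩ := hK.exists_embedding hI hkj
    obtain ⟨L, P, a, b, hab, hPP⟩ := exists_projective_cover K'
    have hL : HasCores L := ih (k := k + 1) (by lia) ⟨P, K', a, b, hab, hPP, hK'⟩
    obtain ⟨V, W, c, e, hce, hW, hV⟩ := hL.res hab hPP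
    obtain ⟨Y, i, p, r, q, h₁, h₂⟩ := exists_pullback hs hce
    exact ⟨Y, W, i, p, h₁, finPd_ext h₂ hV ⟨_, hB⟩, hW⟩

/-! ### Gorenstein projective objects -/

theorem GClass.perpProj {M : C}
    (hM : GClass (fun P : C => Projective P) (fun P : C => Projective P) M) : PerpProj M := by
  obtain ⟨P, d, hd, hP, hex, ⟨e⟩, hQ⟩ := hM
  have epi_lift (n : ℤ) : Epi (kernel.lift (d (n + 1)) (d n) (hd n)) :=
    ((ShortComplex.mk (d n) (d (n + 1)) (hd n)).exact_iff_epi_kernel_lift).1 (hex n)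
  have ses (n : ℤ) : IsSES (kernel.ι (d n)) (kernel.lift (d (n + 1)) (d n) (hd n)) := by
    refine isSES_of_kernel inferInstance (epi_lift n) ?_ ?_
    · rw [← cancel_mono (kernel.ι (d (n + 1)))]
      simp
    · intro T t ht
      refine ⟨kernel.lift (d n) t ?_, kernel.lift_ι _ _ _⟩
      have := congrArg (· ≫ kernel.ι (d (n + 1))) ht
      simpa using this
  have main (Q : C) (hQP : Projective Q) (i : ℕ) :
      ∀ n : ℤ, Subsingleton (Abelian.Ext (kernel (d n)) Q (i + 1)) := by
    induction i with
    | zero =>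
      intro n
      obtain ⟨n, rfl⟩ : ∃ m, n = m + 1 + 1 + 1 := ⟨n - 3, by lia⟩
      refine subsingleton_of_forall_eq 0 fun x => ?_
      obtain ⟨y, rfl⟩ := Ext.contravariant_sequence_exact₃ (ses (n + 1 + 1)).2 _ x
        ((PerpProj.of_projective (hP (n + 1 + 1)) Q hQP 0).elim _ _) (add_zero 1)
      obtain ⟨y, rfl⟩ := Ext.homEquiv₀.symm.surjective y
      -- A morphism from a cycle to `Q` extends to the term of the complex containing that cycle.
      obtain ⟨φ, hφ⟩ := hQ Q hQP n (kernel.lift (d (n + 1 + 1)) (d (n + 1)) (hd _) ≫ y) (by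
        have : d n ≫ kernel.lift (d (n + 1 + 1)) (d (n + 1)) (hd _) = 0 := by
          rw [← cancel_mono (kernel.ι _), Category.assoc, kernel.lift_ι, hd, zero_comp]
        rw [reassoc_of% this, zero_comp])
      have hy : y = kernel.ι (d (n + 1 + 1)) ≫ φ := by
        have := epi_lift (n + 1)
        rw [← cancel_epi (kernel.lift (d (n + 1 + 1)) (d (n + 1)) (hd _)), ← hφ,
          kernel.lift_ι_assoc]
      rw [hy, Ext.homEquiv₀_symm_apply, ← Ext.mk₀_comp_mk₀]
      exact (ses (n + 1 + 1)).2.extClass_comp_assoc _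
    | succ i ih =>
      intro n
      obtain ⟨n, rfl⟩ : ∃ m, n = m + 1 := ⟨n - 1, by lia⟩
      exact ext_subsingleton_right (ses n) (ih n) (PerpProj.of_projective (hP n) Q hQP (i + 1))
  exact fun Q hQP i => by
    have := main Q hQP i 0
    refine subsingleton_of_forall_eq 0 fun x => ?_
    rw [← x.mk₀_id_comp, ← e.hom_inv_id, ← Ext.mk₀_comp_mk₀, Ext.comp_assoc_of_second_deg_zero,
      this.elim ((Ext.mk₀ e.inv).comp x (zero_add _)) 0, Ext.comp_zero]

/-- A relation that is total in both directions admits bi-infinite chains through every point. -/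
theorem exists_int_chain {α : Type*} (r : α → α → Prop) (h₁ : ∀ a, ∃ b, r a b)
    (h₂ : ∀ b, ∃ a, r a b) (a : α) : ∃ Z : ℤ → α, Z 0 = a ∧ ∀ n, r (Z n) (Z (n + 1)) := by
  choose s hs using h₁
  choose t ht using h₂
  refine ⟨fun n => if 0 ≤ n then s^[n.toNat] a else t^[(-n).toNat] a, by simp, fun n => ?_⟩
  rcases lt_trichotomy n (-1) with h | rfl | h
  · obtain ⟨k, rfl⟩ : ∃ k : ℕ, n = -(k : ℤ) - 1 := ⟨(-n - 1).toNat, by lia⟩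
    have e₁ : (-(-(k : ℤ) - 1)).toNat = k + 1 := by lia
    have e₂ : (-(-(k : ℤ) - 1 + 1)).toNat = k := by lia
    simp only [if_neg (show ¬ (0 : ℤ) ≤ -(k : ℤ) - 1 by lia),
      if_neg (show ¬ (0 : ℤ) ≤ -(k : ℤ) - 1 + 1 by lia), e₁, e₂, Function.iterate_succ_apply']
    exact ht _
  · simpa using ht a
  · obtain ⟨k, rfl⟩ : ∃ k : ℕ, n = k := ⟨n.toNat, by lia⟩
    have e₁ : ((k : ℤ) + 1).toNat = k + 1 := by lia
    simp only [if_pos (show (0 : ℤ) ≤ (k : ℤ) by lia),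
      if_pos (show (0 : ℤ) ≤ (k : ℤ) + 1 by lia), e₁, Int.toNat_natCast,
      Function.iterate_succ_apply']
    exact hs _

/-- A complete resolution of `M` is spliced from short exact sequences
`0 → Z n → P n → Z (n + 1) → 0` inside the orthogonal of the projectives: to the
left, projective covers; to the right, the embeddings of `HasCores`, whose middle term has finite
projective dimension and lies in the orthogonal, hence is projective. -/
theorem PerpProj.gClass [EnoughProjectives C] (hc : ∀ M : C, HasCores M) {M : C}
    (hM : PerpProj M) : GClass (fun P : C => Projective P) (fun P : C => Projective P) M := by
  let r (A B : {M : C // PerpProj M}) : Prop :=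
    ∃ (P : C) (f : A.1 ⟶ P) (g : P ⟶ B.1), IsSES f g ∧ Projective P
  obtain ⟨Z, hZ, hr⟩ := exists_int_chain r
    (fun ⟨A, hA⟩ => by
      obtain ⟨V, G, f, g, hs, hV, hG⟩ := hc A
      exact ⟨⟨G, hG⟩, V, f, g, hs, (hA.ext hs hG).projective hV⟩)
    (fun ⟨B, hB⟩ => by
      obtain ⟨K, P, f, g, hs, hP⟩ := exists_projective_cover B
      exact ⟨⟨K, PerpProj.ker hs (PerpProj.of_projective hP) hB⟩, P, f, g, hs, hP⟩) ⟨M, hM⟩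
  choose P f g hs hP using hr
  have hmono (n : ℤ) : Mono (f n) := (hs n).mono
  have hepi (n : ℤ) : Epi (g n) := (hs n).epi
  have hd (n : ℤ) : (g n ≫ f (n + 1)) ≫ g (n + 1) ≫ f (n + 1 + 1) = 0 := by
    rw [Category.assoc, ← Category.assoc (f (n + 1)), (hs (n + 1)).1, zero_comp, comp_zero]
  refine ⟨P, fun n => g n ≫ f (n + 1), hd, hP, fun n => ?_, ?_, ?_⟩
  · have w₁ : f (n + 1) ≫ g (n + 1) ≫ f (n + 1 + 1) = 0 := by
      rw [← Category.assoc, (hs (n + 1)).1, zero_comp]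
    let S := ShortComplex.mk _ _ (hd n)
    let S₁ := ShortComplex.mk _ _ w₁
    let S₂ := ShortComplex.mk _ _ (hs (n + 1)).1
    let φ : S ⟶ S₁ := { τ₁ := g n, τ₂ := 𝟙 _, τ₃ := 𝟙 _ }
    let ψ : S₂ ⟶ S₁ := { τ₁ := 𝟙 _, τ₂ := 𝟙 _, τ₃ := f (n + 1 + 1) }
    have : Epi φ.τ₁ := hepi n
    have : IsIso φ.τ₂ := inferInstanceAs (IsIso (𝟙 _))
    have : Mono φ.τ₃ := inferInstanceAs (Mono (𝟙 _))
    have : Epi ψ.τ₁ := inferInstanceAs (Epi (𝟙 _))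
    have : IsIso ψ.τ₂ := inferInstanceAs (IsIso (𝟙 _))
    have : Mono ψ.τ₃ := hmono (n + 1 + 1)
    exact (ShortComplex.exact_iff_of_epi_of_isIso_of_mono φ).2
      ((ShortComplex.exact_iff_of_epi_of_isIso_of_mono ψ).1 (hs (n + 1)).2.exact)
  · have hk : IsLimit (KernelFork.ofι (f 0) (show f 0 ≫ g 0 ≫ f (0 + 1) = 0 by
        rw [← Category.assoc, (hs 0).1, zero_comp])) :=
      KernelFork.IsLimit.ofι' _ _ fun {T} t ht =>
        have h := (hs 0).lift t (by
          rw [← cancel_mono (f (0 + 1)), Category.assoc, ht, zero_comp])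
        ⟨h.choose, h.choose_spec⟩
    have e₀ : M ≅ (Z 0).1 := eqToIso (by rw [hZ])
    have e₁ : (Z 0).1 ≅ kernel (g 0 ≫ f (0 + 1)) :=
      hk.conePointUniqueUpToIso (limit.isLimit _)
    exact ⟨e₀ ≪≫ e₁⟩
  · intro Q hQ n ψ hψ
    have h0 : f (n + 1) ≫ ψ = 0 := by
      rw [← cancel_epi (g n), ← Category.assoc, hψ, comp_zero]
    obtain ⟨s, hs'⟩ := (hs (n + 1)).desc ψ h0
    obtain ⟨x, hx⟩ := Ext.contravariant_sequence_exact₁ (hs (n + 1 + 1)).2 _ (Ext.mk₀ s)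
      (add_zero 1) (((Z (n + 1 + 1 + 1)).2 Q hQ 0).elim _ _)
    obtain ⟨φ, rfl⟩ := Ext.homEquiv₀.symm.surjective x
    refine ⟨φ, ?_⟩
    have hφ : f (n + 1 + 1) ≫ φ = s := Ext.homEquiv₀.symm.injective (by simpa using hx)
    rw [Category.assoc, hφ, hs']

end Abstract

/-! ### Exact sequences of finite free modules and flatness -/

section Matrices

open Matrix MulOpposite

/-- The action of a matrix over `T` on tuples of elements of a left `T`-module. -/
def act {T : Type*} [Ring T] {N : Type*} [AddCommGroup N] [Module T N] {a b : ℕ}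
    (A : Matrix (Fin a) (Fin b) T) (y : Fin b → N) (i : Fin a) : N := ∑ j, A i j • y j

section
variable {T : Type*} [Ring T] {N N' : Type*} [AddCommGroup N] [Module T N]
  [AddCommGroup N'] [Module T N'] {a b c : ℕ}

theorem act_mul (A : Matrix (Fin a) (Fin b) T) (B : Matrix (Fin b) (Fin c) T) (y : Fin c → N) :
    act (A * B) y = act A (act B y) := by
  ext i
  simp only [act, Matrix.mul_apply, Finset.sum_smul, Finset.smul_sum, mul_smul]
  exact Finset.sum_comm

theorem act_zero_left (y : Fin b → N) : act (0 : Matrix (Fin a) (Fin b) T) y = 0 := by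
  ext i; simp [act]

theorem act_sub (A : Matrix (Fin a) (Fin b) T) (x y : Fin b → N) :
    act A (x - y) = act A x - act A y := by
  ext i; simp [act, smul_sub]

theorem act_map (f : N →ₗ[T] N') (A : Matrix (Fin a) (Fin b) T) (y : Fin b → N) :
    act A (f ∘ y) = f ∘ act A y := by
  ext i; simp [act]

theorem linearCombination_act (A : Matrix (Fin a) (Fin b) T) (y : Fin b → N) (v : Fin a → T) :
    Fintype.linearCombination T (act A y) v = Fintype.linearCombination T y (v ᵥ* A) := by
  simp only [Fintype.linearCombination_apply, act, Matrix.vecMul, dotProduct, Finset.sum_smul,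
    Finset.smul_sum, mul_smul]
  exact Finset.sum_comm

end

/-- For matrices `A` and `B` over `T`, the sequence of row modules
`T ^ c → T ^ a → T ^ b` given by `w ↦ w B` and `v ↦ v A` is exact. -/
def ExactPair {T : Type*} [Ring T] {a b c : ℕ} (A : Matrix (Fin a) (Fin b) T)
    (B : Matrix (Fin c) (Fin a) T) : Prop :=
  B * A = 0 ∧ ∀ v, v ᵥ* A = 0 → ∃ w, w ᵥ* B = v

/-- The maps `T ^ c → T ^ a → T ^ b` given by `B` and `A` extend to an exact sequence with `k`
further finite free modules on the right. -/
def Chain {T : Type*} [Ring T] : ℕ → ∀ {a b c : ℕ}, Matrix (Fin a) (Fin b) T →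
    Matrix (Fin c) (Fin a) T → Prop
  | 0, _, _, _, A, B => ExactPair A B
  | k + 1, _, b, _, A, B => ExactPair A B ∧ ∃ (d : ℕ) (Z : Matrix (Fin b) (Fin d) T), Chain k Z A

theorem Chain.exactPair {T : Type*} [Ring T] {k a b c : ℕ} {A : Matrix (Fin a) (Fin b) T}
    {B : Matrix (Fin c) (Fin a) T} (h : Chain k A B) : ExactPair A B := by
  cases k with
  | zero => exact h
  | succ k => exact h.1

theorem Chain.pred {T : Type*} [Ring T] {k a b c : ℕ} {A : Matrix (Fin a) (Fin b) T}
    {B : Matrix (Fin c) (Fin a) T} (h : Chain (k + 1) A B) : Chain k A B := by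
  induction k generalizing a b c with
  | zero => exact h.1
  | succ k ih => exact ⟨h.1, h.2.choose, h.2.choose_spec.choose, ih h.2.choose_spec.choose_spec⟩

theorem Chain.mono {T : Type*} [Ring T] {k l a b c : ℕ} {A : Matrix (Fin a) (Fin b) T}
    {B : Matrix (Fin c) (Fin a) T} (hl : k ≤ l) (h : Chain l A B) : Chain k A B := by
  induction l, hl using Nat.le_induction with
  | base => exact h
  | succ l _ ih => exact ih h.pred

theorem exists_exactPair {T : Type*} [Ring T] [IsNoetherianRing T] {a b : ℕ}
    (A : Matrix (Fin a) (Fin b) T) : ∃ (c : ℕ) (B : Matrix (Fin c) (Fin a) T), ExactPair A B := by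
  obtain ⟨c, s, hs⟩ := Submodule.fg_iff_exists_fin_generating_family.1
    (IsNoetherian.noetherian (LinearMap.ker (Matrix.toLinearMapRight' A)))
  have hker : ∀ v, v ∈ Submodule.span T (Set.range s) ↔ v ᵥ* A = 0 := by
    intro v; rw [hs]; simp
  refine ⟨c, Matrix.of s, ?_, fun v hv => ?_⟩
  · ext i j
    exact congrFun ((hker (s i)).1 (Submodule.subset_span ⟨i, rfl⟩)) j
  · obtain ⟨w, hw⟩ := (Submodule.mem_span_range_iff_exists_fun T).1 ((hker v).2 hv)
    refine ⟨w, ?_⟩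
    rw [← hw]
    ext j
    simp [Matrix.vecMul, dotProduct]

/-- `Hom(-, E)` with `E` injective preserves exactness of `T ^ c → T ^ a → T ^ b`; tuples in `E ^ a`
stand for maps `T ^ a → E`. -/
theorem exists_act_of_injective {T : Type u} [Ring T] {E : Type u} [AddCommGroup E] [Module T E]
    (hE : Module.Injective T E) {a b c : ℕ} {A : Matrix (Fin a) (Fin b) T}
    {B : Matrix (Fin c) (Fin a) T} (h : ∀ v, v ᵥ* A = 0 → ∃ w, w ᵥ* B = v) (x : Fin a → E)
    (hx : act B x = 0) : ∃ y, act A y = x := by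
  have hle : LinearMap.ker (Matrix.toLinearMapRight' A) ≤
      LinearMap.ker (Fintype.linearCombination T x) := by
    intro v hv
    obtain ⟨w, rfl⟩ := h v (by simpa using hv)
    rw [LinearMap.mem_ker, ← linearCombination_act, hx]
    simp [Fintype.linearCombination_apply]
  obtain ⟨ψ, hψ⟩ := hE.out ((LinearMap.ker (Matrix.toLinearMapRight' A)).liftQ
      (Matrix.toLinearMapRight' A) le_rfl)
    (LinearMap.ker_eq_bot.1 (Submodule.ker_liftQ_eq_bot _ _ _ le_rfl))
    ((LinearMap.ker (Matrix.toLinearMapRight' A)).liftQ (Fintype.linearCombination T x) hle)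
  refine ⟨fun j => ψ (Pi.single j 1), ?_⟩
  ext i
  have h1 := hψ (Submodule.Quotient.mk (Pi.single i 1))
  simp only [Submodule.liftQ_apply] at h1
  have h2 : Fintype.linearCombination T x (Pi.single i 1) = x i := by
    simp
  rw [← h2, ← h1]
  have h3 : Matrix.toLinearMapRight' A (Pi.single i 1) =
      ∑ j, A i j • (Pi.single j 1 : Fin b → T) := by
    ext k
    simp [Pi.single_apply]
  rw [h3, map_sum]
  simp [act]

theorem isSES_module {T : Type u} [Ring T] {X Y Z : ModuleCat.{u} T} {f : X ⟶ Y} {g : Y ⟶ Z}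
    (h : IsSES f g) : Function.Injective f ∧ Function.Surjective g ∧ (∀ x, g (f x) = 0) ∧
      ∀ y, g y = 0 → ∃ x, f x = y := by
  obtain ⟨w, h⟩ := h
  refine ⟨(ModuleCat.mono_iff_injective f).1 h.mono_f, (ModuleCat.epi_iff_surjective g).1 h.epi_g,
    fun x => ?_, fun y hy => ?_⟩
  · rw [← ModuleCat.comp_apply, w]; rfl
  · exact (ShortComplex.moduleCat_exact_iff _).1 h.exact y hy

/-- If `J` has injective dimension at most `m`, then `Hom(-, J)` preserves exactness of an exact
sequence of finite free modules at a term followed by at least `m + 1` further ones on the right: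
the obstruction is a class in `Extᵐ⁺¹`. In `act A y`, tuples `y` in `J ^ b` stand for maps
`T ^ b → J`. -/
theorem Chain.exists_act {T : Type u} [Ring T] {m : ℕ} {J : ModuleCat.{u} T}
    (hJ : CoHat (C := ModuleCat.{u} T) (fun I => Injective I) m J) {a b c : ℕ}
    {A : Matrix (Fin a) (Fin b) T} {B : Matrix (Fin c) (Fin a) T} (h : Chain m A B)
    (x : Fin a → J) (hx : act B x = 0) : ∃ y, act A y = x := by
  induction m generalizing J a b c with
  | zero =>
    have : Injective J := hJ
    exact exists_act_of_injective (Module.injective_module_of_injective_object T J) h.2 x hx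
  | succ m ih =>
    obtain ⟨E, K, f, g, hs, hE, hK⟩ := hJ
    obtain ⟨hAB, d, Z, hZ⟩ := h
    obtain ⟨hinj, hsurj, hzero, hex⟩ := isSES_module hs
    have : Injective E := hE
    obtain ⟨y, hy⟩ := exists_act_of_injective (Module.injective_module_of_injective_object T E)
      hAB.2 (f.hom ∘ x) (by rw [act_map, hx]; ext; simp)
    obtain ⟨z, hz⟩ := ih hK hZ (g.hom ∘ y) (by
      rw [act_map, hy]; ext i; exact hzero (x i))
    choose z' hz' using fun k => hsurj (z k)
    obtain rfl : z = g.hom ∘ z' := funext fun k => (hz' k).symm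
    rw [act_map] at hz
    choose y' hy' using fun k => hex ((y - act Z z') k) (by
      have := congrFun hz k
      simp only [Function.comp_apply] at this
      simp [this])
    refine ⟨y', ?_⟩
    have h1 : f.hom ∘ y' = y - act Z z' := funext hy'
    have h2 : f.hom ∘ act A y' = f.hom ∘ x := by
      rw [← act_map, h1, act_sub, hy, ← act_mul, hZ.exactPair.1, act_zero_left, sub_zero]
    exact funext fun i => hinj (congrFun h2 i)

/-- A matrix over the opposite ring, read as the transposed matrix over the ring. -/
def tr {R : Type*} {a b : ℕ} (A : Matrix (Fin a) (Fin b) Rᵐᵒᵖ) : Matrix (Fin b) (Fin a) R :=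
  Matrix.of fun i j => unop (A j i)

theorem tr_mul {R : Type*} [Ring R] {a b c : ℕ} (A : Matrix (Fin a) (Fin b) Rᵐᵒᵖ)
    (B : Matrix (Fin b) (Fin c) Rᵐᵒᵖ) : tr (A * B) = tr B * tr A := by
  ext i j; simp [tr, Matrix.mul_apply]

/-- Tensoring with `N` preserves the exactness at the term between `B` and `A` of every exact
sequence of finite free right `R`-modules given by `Chain k A B` over `Rᵐᵒᵖ`. The tensored maps are
the actions of the transposed matrices on tuples in `N`. This amounts to the vanishing on `N` of
`Tor` in degree `k + 1`, and for `k = 0` to flatness. -/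
def TensorExact {R : Type*} [Ring R] (k : ℕ) (N : Type*) [AddCommGroup N] [Module R N] : Prop :=
  ∀ ⦃a b c : ℕ⦄ (A : Matrix (Fin a) (Fin b) Rᵐᵒᵖ) (B : Matrix (Fin c) (Fin a) Rᵐᵒᵖ),
    Chain k A B → ∀ x : Fin a → N, act (tr A) x = 0 → ∃ y, act (tr B) y = x

theorem TensorExact.mono {R : Type*} [Ring R] {k l : ℕ} (hkl : k ≤ l) {N : Type*}
    [AddCommGroup N] [Module R N] (h : TensorExact (R := R) k N) : TensorExact (R := R) l N :=
  fun _ _ _ A B hAB => h A B (hAB.mono hkl)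

theorem TensorExact.finsupp {R : Type*} [Ring R] (k : ℕ) (ι : Type*) :
    TensorExact (R := R) k (ι →₀ R) := by
  classical
  intro a b c A B h x hx
  have key : ∀ i : ι, ∃ w : Fin c → R, (∀ j, ∑ l, tr B j l * w l = x j i) ∧
      ((∀ j, x j i = 0) → w = 0) := by
    intro i
    by_cases h0 : ∀ j, x j i = 0
    · exact ⟨0, fun j => by simp [h0], fun _ => rfl⟩
    · obtain ⟨w, hw⟩ := h.exactPair.2 (fun j => op (x j i)) (by
        ext k
        apply unop_injective
        have := DFunLike.congr_fun (congrFun hx k) i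
        simpa [act, tr, Matrix.vecMul, dotProduct, Finsupp.finsetSum_apply] using this)
      refine ⟨fun l => unop (w l), fun j => ?_, fun h => absurd h h0⟩
      have := congrArg unop (congrFun hw j)
      simpa [tr, Matrix.vecMul, dotProduct] using this
  choose w hw hw0 using key
  refine ⟨fun l => Finsupp.onFinset (Finset.univ.biUnion fun j => (x j).support)
    (fun i => w i l) fun i hi => ?_, ?_⟩
  · by_contra hc
    simp only [Finset.mem_biUnion, Finset.mem_univ, true_and, Finsupp.mem_support_iff, not_exists,
      not_not] at hc
    exact hi (by rw [hw0 i hc]; rfl)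
  · ext j i
    simpa [act, Finsupp.finsetSum_apply] using hw i j

theorem TensorExact.of_projective {R : Type*} [Ring R] (k : ℕ) (P : Type*) [AddCommGroup P]
    [Module R P] [Module.Projective R P] : TensorExact (R := R) k P := by
  intro a b c A B h x hx
  obtain ⟨s, hs⟩ := Module.projective_def'.1 (inferInstance : Module.Projective R P)
  obtain ⟨y, hy⟩ := TensorExact.finsupp k P A B h (s ∘ x) (by rw [act_map, hx]; ext; simp)
  refine ⟨Finsupp.linearCombination R id ∘ y, ?_⟩
  rw [act_map, hy]
  ext i
  exact LinearMap.congr_fun hs (x i)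

/-- For `E` injective, `N ↦ Tor (N, E)` on finitely generated right modules is dual to
`Ext (N, R)`, so it vanishes above the right self-injective dimension of `R`. -/
theorem TensorExact.of_injective {R : Type u} [Ring R] {m k : ℕ} (hmk : m ≤ k)
    (hR : CoHat (C := ModuleCat.{u} Rᵐᵒᵖ) (fun I => Injective I) m (ModuleCat.of Rᵐᵒᵖ Rᵐᵒᵖ))
    {E : Type u} [AddCommGroup E] [Module R E] (hE : Module.Injective R E) :
    TensorExact (R := R) k E := by
  intro a b c A B h x hx
  refine exists_act_of_injective hE (fun v hv => ?_) x hx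
  obtain ⟨y, hy⟩ := (h.mono hmk).exists_act hR (fun i => op (v i)) (by
    ext l
    apply unop_injective
    simpa [act, tr, Matrix.vecMul, dotProduct] using congrFun hv l)
  refine ⟨fun l => unop (y l), ?_⟩
  ext i
  have := congrArg unop (congrFun hy i)
  simpa [act, tr, Matrix.vecMul, dotProduct] using this

/-- Dimension shifting along a syzygy `N'` of `N`. -/
theorem TensorExact.syzygy {R : Type u} [Ring R] [IsNoetherianRing Rᵐᵒᵖ] {k : ℕ}
    {N' L N : ModuleCat.{u} R} {f : N' ⟶ L} {g : L ⟶ N} (hs : IsSES f g) (hL : Projective L)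
    (hN : TensorExact (R := R) (k + 1) N) : TensorExact (R := R) k N' := by
  intro a b c A B h x hx
  obtain ⟨hinj, hsurj, hzero, hex⟩ := isSES_module hs
  have : Module.Projective R L := (IsProjective.iff_projective L).2 hL
  obtain ⟨y, hy⟩ := TensorExact.of_projective k L A B h (f.hom ∘ x) (by
    rw [act_map, hx]; ext; simp)
  obtain ⟨d, C, hC⟩ := exists_exactPair B
  obtain ⟨z, hz⟩ := hN B C ⟨hC, b, A, h⟩ (g.hom ∘ y) (by
    rw [act_map, hy]; ext i; exact hzero (x i))
  choose z' hz' using fun k => hsurj (z k)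
  obtain rfl : z = g.hom ∘ z' := funext fun k => (hz' k).symm
  rw [act_map] at hz
  choose y' hy' using fun k => hex ((y - act (tr C) z') k) (by
    have := congrFun hz k
    simp only [Function.comp_apply] at this
    simp [this])
  refine ⟨y', ?_⟩
  have h1 : f.hom ∘ y' = y - act (tr C) z' := funext hy'
  have h2 : f.hom ∘ act (tr B) y' = f.hom ∘ x := by
    have h0 : tr (0 : Matrix (Fin d) (Fin a) Rᵐᵒᵖ) = 0 := rfl
    rw [← act_map, h1, act_sub, hy, ← act_mul, ← tr_mul, hC.1, h0, act_zero_left, sub_zero]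
  exact funext fun i => hinj (congrFun h2 i)

/-- Every map from a finitely generated module to `F` factors through a finite free module; over
a left noetherian ring this is flatness (Lazard's criterion). -/
def FinFactor (R : Type u) [Ring R] (F : Type u) [AddCommGroup F] [Module R F] : Prop :=
  ∀ (M : Type u) [AddCommGroup M] [Module R M] [Module.Finite R M] (f : M →ₗ[R] F),
    ∃ (k : ℕ) (p : M →ₗ[R] (Fin k → R)) (q : (Fin k → R) →ₗ[R] F), q ∘ₗ p = f

/-- The relations of `M` give a matrix `A`; a map `M → F` is a tuple in `F` annihilated by it, so
it comes from a tuple `y` along the matrix `B` of right relations of `A`, and `B` itself defines a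
map from `M` to a finite free module. -/
theorem TensorExact.finFactor {R : Type u} [Ring R] [IsNoetherianRing R] [IsNoetherianRing Rᵐᵒᵖ]
    {F : Type u} [AddCommGroup F] [Module R F] (hF : TensorExact (R := R) 0 F) :
    FinFactor R F := by
  intro M _ _ _ f
  obtain ⟨s, π, hπ⟩ := Module.Finite.exists_fin' R M
  obtain ⟨t, r, hr⟩ := Submodule.fg_iff_exists_fin_generating_family.1
    (IsNoetherian.noetherian (LinearMap.ker π))
  let A : Matrix (Fin s) (Fin t) Rᵐᵒᵖ := Matrix.of fun j i => op (r i j)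
  obtain ⟨c, B, hB⟩ := exists_exactPair A
  have hlin : ∀ v, π v = ∑ j, v j • π (Pi.single j 1) := by
    intro v
    conv_lhs => rw [pi_eq_sum_univ' v]
    simp
  obtain ⟨y, hy⟩ := hF A B hB (fun j => f (π (Pi.single j 1))) (by
    ext i
    have : π (r i) = 0 := by
      rw [← LinearMap.mem_ker, ← hr]; exact Submodule.subset_span ⟨i, rfl⟩
    have h2 := congrArg f ((hlin (r i)).symm.trans this)
    simpa [act, tr, A] using h2)
  have hrel : tr A * tr B = 0 := by rw [← tr_mul, hB.1]; rfl
  have hle : LinearMap.ker π ≤ LinearMap.ker (Matrix.toLinearMapRight' (tr B)) := by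
    rw [← hr, Submodule.span_le]
    rintro _ ⟨i, rfl⟩
    have h1 : r i ᵥ* tr B = 0 := congrFun hrel i
    simpa using h1
  let e := π.quotKerEquivOfSurjective hπ
  refine ⟨c, (LinearMap.ker π).liftQ _ hle ∘ₗ e.symm.toLinearMap,
    Fintype.linearCombination R y, ?_⟩
  refine LinearMap.ext fun z => ?_
  obtain ⟨v, rfl⟩ := hπ z
  have he : e.symm (π v) = Submodule.Quotient.mk v := by
    rw [LinearEquiv.symm_apply_eq]; rfl
  simp only [LinearMap.comp_apply, LinearEquiv.coe_coe, he, Submodule.liftQ_apply]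
  rw [Matrix.toLinearMapRight'_apply, ← linearCombination_act, hy, hlin, map_sum]
  simp [Fintype.linearCombination_apply]

theorem FinFactor.of_projective {R : Type u} [Ring R] [IsNoetherianRing R]
    [IsNoetherianRing Rᵐᵒᵖ] (P : Type u) [AddCommGroup P] [Module R P] [Module.Projective R P] :
    FinFactor R P := (TensorExact.of_projective 0 P).finFactor

end Matrices

/-! ### Dimension bounds over an Iwanaga-Gorenstein ring -/

section Dimensions

theorem hasInjectiveDimensionLT_of_coHat {C : Type u} [Category.{v} C] [Abelian C] {n : ℕ} {M : C}
    (h : CoHat (fun I : C => Injective I) n M) : HasInjectiveDimensionLT M (n + 1) := by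
  induction n generalizing M with
  | zero => have : Injective M := h; infer_instance
  | succ n ih =>
    obtain ⟨E, K, f, g, hs, hE, hK⟩ := h
    exact (hs.2.hasInjectiveDimensionLT_X₃_iff n hE).1 (ih hK)

theorem exists_finite_cover {R : Type u} [Ring R] [IsNoetherianRing R] (M : ModuleCat.{u} R)
    [Module.Finite R M] : ∃ (K P : ModuleCat.{u} R) (f : K ⟶ P) (g : P ⟶ M), IsSES f g ∧ Projective P ∧
      Module.Finite R K := by
  obtain ⟨s, π, hπ⟩ := Module.Finite.exists_fin' R M
  refine ⟨ModuleCat.of R (LinearMap.ker π), ModuleCat.of R (Fin s → R),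
    ModuleCat.ofHom (LinearMap.ker π).subtype, ModuleCat.ofHom π, ⟨?_, ?_⟩, ?_, ?_⟩
  · ext x; exact x.2
  · refine ShortComplex.ShortExact.mk' ?_ ?_ ?_
    · rw [ShortComplex.moduleCat_exact_iff]
      exact fun x hx => ⟨⟨x, hx⟩, rfl⟩
    · exact (ModuleCat.mono_iff_injective _).2 Subtype.val_injective
    · exact (ModuleCat.epi_iff_surjective _).2 hπ
  · infer_instance
  · infer_instance

variable {R : Type u} [Ring R] [HasExt.{w} (ModuleCat.{u} R)]

theorem ext_finPow_subsingleton {n : ℕ}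
    (hR : HasInjectiveDimensionLT (ModuleCat.of R R) n) (k : ℕ) (M : ModuleCat.{u} R) :
    Subsingleton (Abelian.Ext M (ModuleCat.of R (Fin k → R)) n) := by
  refine subsingleton_of_forall_eq 0 fun e => ?_
  have hid : 𝟙 (ModuleCat.of R (Fin k → R)) =
      ∑ i, (ModuleCat.ofHom (LinearMap.proj i) : _ ⟶ ModuleCat.of R R) ≫
        ModuleCat.ofHom (LinearMap.single R (fun _ : Fin k => R) i) := by
    ext x j
    simp [ModuleCat.hom_sum, Pi.single_apply]
  rw [← e.comp_mk₀_id, hid, Ext.mk₀_sum, Ext.comp_sum]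
  refine Finset.sum_eq_zero fun i _ => ?_
  rw [← Ext.mk₀_comp_mk₀, ← Ext.comp_assoc_of_third_deg_zero,
    (e.comp (Ext.mk₀ _) (add_zero n)).eq_zero_of_hasInjectiveDimensionLT n le_rfl, Ext.zero_comp]

/-- Every class in `Extʲ(M, F)` with `M` finitely generated comes from `Extʲ(M, Rᵏ)` for some map
`Rᵏ → F`. -/
theorem FinFactor.ext_factor [IsNoetherianRing R] {F : ModuleCat.{u} R} (hF : FinFactor R F)
    (j : ℕ) (M : ModuleCat.{u} R) [Module.Finite R M] (e : Abelian.Ext M F j) :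
    ∃ (k : ℕ) (e' : Abelian.Ext M (ModuleCat.of R (Fin k → R)) j)
      (q : ModuleCat.of R (Fin k → R) ⟶ F), e'.comp (Ext.mk₀ q) (add_zero j) = e := by
  induction j generalizing M with
  | zero =>
    obtain ⟨f, rfl⟩ := Ext.homEquiv₀.symm.surjective e
    obtain ⟨k, p, q, h⟩ := hF M f.hom
    refine ⟨k, Ext.mk₀ (ModuleCat.ofHom p), ModuleCat.ofHom q, ?_⟩
    rw [Ext.mk₀_comp_mk₀]
    have : ModuleCat.ofHom p ≫ ModuleCat.ofHom q = f := by
      ext x; exact LinearMap.congr_fun h x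
    rw [this]; rfl
  | succ j ih =>
    obtain ⟨K, P, f, g, hs, hP, hK⟩ := exists_finite_cover M
    obtain ⟨e₁, rfl⟩ := Ext.contravariant_sequence_exact₃ hs.2 _ e
      ((HasProjectiveDimensionLT.subsingleton P 1 (j + 1) (by lia) F).elim _ _) (add_comm 1 j)
    obtain ⟨k, e', q, rfl⟩ := ih K e₁
    exact ⟨k, hs.2.extClass.comp e' (add_comm 1 j), q, Ext.comp_assoc_of_third_deg_zero _ _ _ _⟩

/-- Baer's criterion in higher degrees. -/
theorem hasInjectiveDimensionLT_of_finite {n : ℕ} {F : ModuleCat.{u} R}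
    (h : ∀ M : ModuleCat.{u} R, Module.Finite R M → Subsingleton (Abelian.Ext M F (n + 1))) :
    HasInjectiveDimensionLT F (n + 1) := by
  induction n generalizing F with
  | zero =>
    suffices Injective F by infer_instance
    have hB : Module.Baer R F := by
      intro I g
      have hses : IsSES (ModuleCat.ofHom I.subtype) (ModuleCat.ofHom (Submodule.mkQ I)) := by
        refine ⟨?_, ShortComplex.ShortExact.mk' ?_ ?_ ?_⟩
        · ext x; simp
        · rw [ShortComplex.moduleCat_exact_iff]
          exact fun x hx => ⟨⟨x, (Submodule.Quotient.mk_eq_zero I).1 hx⟩, rfl⟩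
        · exact (ModuleCat.mono_iff_injective _).2 Subtype.val_injective
        · exact (ModuleCat.epi_iff_surjective _).2 (Submodule.mkQ_surjective I)
      obtain ⟨e, he⟩ := Ext.contravariant_sequence_exact₁ hses.2 F
        (Ext.mk₀ (ModuleCat.ofHom g)) (add_zero 1)
        ((h (ModuleCat.of R (R ⧸ I)) (inferInstanceAs (Module.Finite R (R ⧸ I)))).elim _ _)
      obtain ⟨φ, rfl⟩ := Ext.homEquiv₀.symm.surjective e
      have hφ : ModuleCat.ofHom I.subtype ≫ φ = ModuleCat.ofHom g :=
        Ext.homEquiv₀.symm.injective (by simpa using he)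
      exact ⟨φ.hom, fun x hx => LinearMap.congr_fun (congrArg ModuleCat.Hom.hom hφ) ⟨x, hx⟩⟩
    have := hB.injective
    exact Module.injective_object_of_injective_module R F
  | succ n ih =>
    have hs := isSES_cokernel (Injective.ι F)
    refine (hs.2.hasInjectiveDimensionLT_X₃_iff n inferInstance).1 (ih fun M hM => ?_)
    exact ext_subsingleton_coker hs (HasInjectiveDimensionLT.subsingleton _ 1 (n + 1) (by lia) M)
      (h M hM)

theorem FinFactor.hasInjectiveDimensionLT [IsNoetherianRing R] {n : ℕ}
    (hR : HasInjectiveDimensionLT (ModuleCat.of R R) (n + 1)) {F : ModuleCat.{u} R}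
    (hF : FinFactor R F) : HasInjectiveDimensionLT F (n + 1) := by
  refine hasInjectiveDimensionLT_of_finite fun M hM => subsingleton_of_forall_eq 0 fun e => ?_
  obtain ⟨k, e', q, rfl⟩ := hF.ext_factor _ M e
  rw [(ext_finPow_subsingleton hR k M).elim e' 0, Ext.zero_comp]

/-- In a class of modules closed under syzygies, all of injective dimension at most `n`, all
modules have projective dimension at most `n`: `Ext` of degree `n + 1` from a module to its own
`(n + 1)`-st syzygy vanishes, so that the `n`-th syzygy is a summand of a projective. -/
theorem hasProjectiveDimensionLT_of_syzygies {n : ℕ} (X : ModuleCat.{u} R → Prop)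
    (hX : ∀ N, X N → HasInjectiveDimensionLT N (n + 1))
    (hsyz : ∀ {K P N : ModuleCat.{u} R} {f : K ⟶ P} {g : P ⟶ N}, IsSES f g → Projective P →
      X N → X K) {N : ModuleCat.{u} R} (hN : X N) : HasProjectiveDimensionLT N (n + 1) := by
  -- `Ext` out of the `i`-th syzygy into the class vanishes in degree `n - i + 1 = j + 1`.
  suffices H : ∀ j ≤ n, ∀ N, X N → (∀ Y, X Y → Subsingleton (Abelian.Ext N Y (j + 1))) →
      HasProjectiveDimensionLT N (j + 1) from
    H n le_rfl N hN fun Y hY =>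
      have := hX Y hY
      HasInjectiveDimensionLT.subsingleton Y (n + 1) (n + 1) le_rfl N
  intro j
  induction j with
  | zero =>
    intro _ N hN h
    obtain ⟨K, P, f, g, hs, hP⟩ := exists_projective_cover N
    have := projective_of_ext_ker hs hP (h K (hsyz hs hP hN))
    infer_instance
  | succ j ih =>
    intro hj N hN h
    obtain ⟨K, P, f, g, hs, hP⟩ := exists_projective_cover N
    refine (hs.2.hasProjectiveDimensionLT_X₃_iff j hP).2
      (ih (by lia) K (hsyz hs hP hN) fun Y hY => ?_)
    exact ext_subsingleton_left hs (HasProjectiveDimensionLT.subsingleton P 1 (j + 1) (by lia) Y)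
      (h Y hY)

theorem TensorExact.hasProjectiveDimensionLT [IsNoetherianRing R] [IsNoetherianRing Rᵐᵒᵖ] {n : ℕ}
    (hR : HasInjectiveDimensionLT (ModuleCat.of R R) (n + 1)) {m : ℕ} {N : ModuleCat.{u} R}
    (hN : TensorExact (R := R) m N) : HasProjectiveDimensionLT N (m + n + 1) := by
  induction m generalizing N with
  | zero =>
    rw [Nat.zero_add]
    exact hasProjectiveDimensionLT_of_syzygies (fun N => TensorExact (R := R) 0 N)
      (fun N hN => hN.finFactor.hasInjectiveDimensionLT hR)
      (fun hs hP hN => TensorExact.syzygy hs hP (hN.mono (Nat.zero_le 1))) hN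
  | succ m ih =>
    obtain ⟨K, P, f, g, hs, hP⟩ := exists_projective_cover N
    rw [show m + 1 + n + 1 = m + n + 1 + 1 by lia]
    exact (hs.2.hasProjectiveDimensionLT_X₃_iff (m + n) hP).2 (ih (TensorExact.syzygy hs hP hN))

/-- Over an Iwanaga-Gorenstein ring there is a common bound for the projective dimensions of the
injective modules and the injective dimensions of the projective modules. -/
theorem exists_dimension_bound (R : Type u) [Ring R] [IsNoetherianRing R] [IsNoetherianRing Rᵐᵒᵖ]
    [HasExt.{w} (ModuleCat.{u} R)]
    (hinjL : ∃ n, CoHat (C := ModuleCat.{u} R) (fun I => Injective I) n (ModuleCat.of R R))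
    (hinjR : ∃ n, CoHat (C := ModuleCat.{u} Rᵐᵒᵖ) (fun I => Injective I) n
      (ModuleCat.of Rᵐᵒᵖ Rᵐᵒᵖ)) :
    ∃ d : ℕ, (∀ E : ModuleCat.{u} R, Injective E → HasProjectiveDimensionLT E (d + 1)) ∧
      ∀ P : ModuleCat.{u} R, Projective P → HasInjectiveDimensionLT P (d + 1) := by
  obtain ⟨n, hn⟩ := hinjL
  obtain ⟨m, hm⟩ := hinjR
  have hR := hasInjectiveDimensionLT_of_coHat hn
  refine ⟨m + n, fun E hE => ?_, fun P hP => ?_⟩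
  · exact (TensorExact.of_injective le_rfl hm
      (Module.injective_module_of_injective_object R E)).hasProjectiveDimensionLT hR
  · have : Module.Projective R P := (IsProjective.iff_projective P).2 hP
    have := (FinFactor.of_projective P).hasInjectiveDimensionLT hR (F := P)
    exact hasInjectiveDimensionLT_of_ge P (n + 1) _ (by lia)

end Dimensions

/-! ### The Hovey twin cotorsion pair -/

/-- If `R` is an Iwanaga–Gorenstein ring (left and right noetherian, and of
finite self-injective dimension on both sides), then `((P(R), R-Mod), (GP(R), P(R)^))` is a
Hovey twin cotorsion pair on `R`-Mod, where `P(R)^` is the class of modules of finite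
projective dimension. -/
theorem statement15 (R : Type u) [Ring R] [IsNoetherianRing R] [IsNoetherianRing Rᵐᵒᵖ]
    [HasExt.{w} (ModuleCat.{u} R)]
    (hinjL : ∃ n, CoHat (C := ModuleCat.{u} R) (fun I => Injective I) n (ModuleCat.of R R))
    (hinjR : ∃ n, CoHat (C := ModuleCat.{u} Rᵐᵒᵖ) (fun I => Injective I) n
      (ModuleCat.of Rᵐᵒᵖ Rᵐᵒᵖ)) :
    CotorsionPairOn (C := ModuleCat.{u} R)
      (fun _ => True) (fun P => Projective P) (fun _ => True) ∧
    CotorsionPairOn (C := ModuleCat.{u} R) (fun _ => True)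
      (GClass (fun P => Projective P) (fun P => Projective P))
      (HatAll (fun P => Projective P)) ∧
    (∀ M N : ModuleCat.{u} R, Projective M → HatAll (fun P => Projective P) N →
      Subsingleton (Abelian.Ext M N 1)) ∧
    (∀ M : ModuleCat.{u} R,
      ConeCls (HatAll (fun P => Projective P)) (fun P => Projective P) M ↔
      CoConeCls (HatAll (fun P => Projective P)) (fun P => Projective P) M) := by
  have hpd (M : ModuleCat.{u} R) : HatAll (fun P : ModuleCat.{u} R => Projective P) M ↔
    ∃ n, HasProjectiveDimensionLT M n := hatAll_iff
  obtain ⟨d, hI, hP⟩ := exists_dimension_bound R hinjL hinjR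
  have hc (M : ModuleCat.{u} R) : HasCores M :=
    Syzygy.hasCores hI hP (k := 0) (add_zero d) trivial
  have hG (M : ModuleCat.{u} R) : GClass (fun P : ModuleCat.{u} R => Projective P)
      (fun P => Projective P) M ↔ PerpProj M :=
    ⟨GClass.perpProj, PerpProj.gClass hc⟩
  have hzero : Projective (0 : ModuleCat.{u} R) := Projective.zero_projective
  refine ⟨⟨fun _ _ => trivial, fun _ _ => trivial, fun e h => Projective.of_iso e h,
      fun i p hip h => (Retract.mk i p hip).projective, fun _ _ => trivial,
      fun _ _ _ _ => trivial, fun M N hM _ => HasProjectiveDimensionLT.subsingleton M 1 1 le_rfl N,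
      fun M _ => ?_, fun M _ => ⟨M, 0, _, _, isSES_id_zero M, hzero, trivial⟩⟩,
    ⟨fun _ _ => trivial, fun _ _ => trivial, fun e h => ?_, fun i p hip h => ?_, fun e h => ?_,
      fun i p hip h => ?_, fun M N hM hN => ?_, fun M _ => ?_, fun M _ => ?_⟩,
    fun M N hM _ => HasProjectiveDimensionLT.subsingleton M 1 1 le_rfl N, fun M => ⟨?_, ?_⟩⟩
  · obtain ⟨K, P, f, g, hs, hP⟩ := exists_projective_cover M
    exact ⟨K, P, f, g, hs, hP, trivial⟩
  · exact (hG _).2 (((hG _).1 h).retract e.inv e.hom e.inv_hom_id)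
  · exact (hG _).2 (((hG _).1 h).retract i p hip)
  · obtain ⟨n, hn⟩ := (hpd _).1 h
    exact (hpd _).2 ⟨n, hasProjectiveDimensionLT_of_iso e n⟩
  · obtain ⟨n, hn⟩ := (hpd _).1 h
    exact (hpd _).2 ⟨n, (Retract.mk i p hip).hasProjectiveDimensionLT n⟩
  · obtain ⟨n, hn⟩ := hN
    exact ((hG _).1 hM).hat hn 0
  · obtain ⟨K, P, f, g, hs, hP⟩ := exists_projective_cover M
    obtain ⟨V, G, f', g', hs', hG', hV⟩ := (hc K).res hs hP
    exact ⟨V, G, f', g', hs', (hG _).2 hG', (hpd _).2 hV⟩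
  · obtain ⟨V, G, f', g', hs', hV, hG'⟩ := hc M
    exact ⟨V, G, f', g', hs', (hG _).2 hG', (hpd _).2 hV⟩
  -- Both `Cone` and `CoCone` are the class of modules of finite projective dimension.
  · rintro ⟨V, S, f, g, hs, hV, hS⟩
    have := finPd_coker hs ((hpd _).1 hV) ⟨1, inferInstance⟩
    exact ⟨M, 0, _, _, isSES_id_zero M, (hpd _).2 this, hzero⟩
  · rintro ⟨V, S, f, g, hs, hV, hS⟩
    have hM := finPd_ker hs ((hpd _).1 hV) ⟨1, inferInstance⟩
    obtain ⟨K, P, f, g, hs, hP⟩ := exists_projective_cover M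
    exact ⟨K, P, f, g, hs, (hpd _).2 (finPd_ker hs ⟨1, inferInstance⟩ hM), hP⟩

end FrobeniusPaper
end

section
/- Let (X, W) be a left Frobenius pair in a triangulated category T. Then X̂ is the smallest thick triangulated subcategory of T containing X; that is, X̂ is a strictly full triangulated subcategory of T closed under direct summands, and it is contained in every such subcategory containing X. -/
/-!
Closure under cocones, applied to `M⟦-1⟧ ⟶ 0 ⟶ M`, gives `X⟦-1⟧ ⊆ X`, so the subcategories
`X⟦n⟧` increase with `n`, and each is closed under extensions and direct summands. A triangle
`K ⟶ E ⟶ M` exhibits `M` as an extension of `K⟦1⟧` by `E`, hence `X̂ₙ ⊆ X⟦n⟧` by induction on `n`;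
conversely the triangles `M⟦-1⟧ ⟶ 0 ⟶ M` give `X⟦n⟧ ⊆ X̂ₙ`. Thus `X̂ₙ = X⟦n⟧`
(`triHat_iff`) and `X̂ = ⋃ₙ X⟦n⟧`, from which shift, cone and summand closure are immediate.
-/

open CategoryTheory CategoryTheory.Limits CategoryTheory.Pretriangulated ZeroObject

universe v u

namespace FrobeniusPaperTri

variable {T : Type u} [Category.{v} T] [HasZeroObject T] [HasShift T ℤ] [Preadditive T]
  [∀ n : ℤ, (shiftFunctor T n).Additive] [Pretriangulated T]

/-- A "subcategory" of the triangulated category `T`: a full additive subcategory, regarded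
as the membership predicate on objects, closed under isomorphisms and direct summands. -/
structure IsTriSubcat (X : T → Prop) : Prop where
  zero : X 0
  iso_closed : ∀ {A B : T}, (A ≅ B) → X A → X B
  summand_closed : ∀ {A M : T} (i : A ⟶ M) (p : M ⟶ A), i ≫ p = 𝟙 A → X M → X A

/-- `TriHat X n M` : `M ∈ X̂ₙ`, i.e. there are distinguished triangles
`K_{i+1} → X_i → K_i → K_{i+1}[1]` for `0 ≤ i ≤ n-1` with `K₀ = M`, all `X_i ∈ X` and
`K_n ∈ X`. -/
def TriHat (X : T → Prop) : ℕ → T → Prop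
  | 0, M => X M
  | (n + 1), M => ∃ (K E : T) (f : K ⟶ E) (g : E ⟶ M) (h : M ⟶ K⟦(1 : ℤ)⟧),
      (Triangle.mk f g h ∈ distTriang T) ∧ X E ∧ TriHat X n K

/-- `M ∈ X̂ = ⋃ₙ X̂ₙ`. -/
def TriHatAll (X : T → Prop) (M : T) : Prop := ∃ n, TriHat X n M

/-- A left Frobenius pair `(X, W)` in the triangulated category `T`. -/
structure TriLeftFrobenius (X W : T → Prop) : Prop where
  subX : IsTriSubcat X
  subW : IsTriSubcat W
  /-- `X` is closed under extensions. -/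
  extClosed : ∀ ⦃A B M : T⦄ (f : A ⟶ B) (g : B ⟶ M) (h : M ⟶ A⟦(1 : ℤ)⟧),
    (Triangle.mk f g h ∈ distTriang T) →
    X A → X M → X B
  /-- `X` is closed under cocones of deflations. -/
  coconeClosed : ∀ ⦃A B M : T⦄ (f : A ⟶ B) (g : B ⟶ M) (h : M ⟶ A⟦(1 : ℤ)⟧),
    (Triangle.mk f g h ∈ distTriang T) →
    X B → X M → X A
  /-- `W ⊆ X`. -/
  WsubX : ∀ M, W M → X M
  /-- `W` is a cogenerator for `X`: every `M ∈ X` fits in a distinguished triangle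
  `M → W₀ → X' → M[1]` with `W₀ ∈ W`, `X' ∈ X`. -/
  cogen : ∀ M, X M → ∃ (W₀ X' : T) (f : M ⟶ W₀) (g : W₀ ⟶ X') (h : X' ⟶ M⟦(1 : ℤ)⟧),
    (Triangle.mk f g h ∈ distTriang T) ∧ W W₀ ∧ X X'
  /-- `W ⊆ X^⊥`: `Hom(M, N[i]) = 0` for `i ≥ 1`, `M ∈ X`, `N ∈ W`. -/
  perp : ∀ M N, X M → W N → ∀ i : ℤ, 1 ≤ i → ∀ f : M ⟶ N⟦i⟧, f = 0

/-- A thick (strictly full) triangulated subcategory of `T`, closed under direct summands. -/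
structure IsThickTriSub (S : T → Prop) : Prop where
  zero : S 0
  iso_closed : ∀ {A B : T}, (A ≅ B) → S A → S B
  shift_closed : ∀ (M : T) (n : ℤ), S M → S (M⟦n⟧)
  ext_closed : ∀ ⦃A B M : T⦄ (f : A ⟶ B) (g : B ⟶ M) (h : M ⟶ A⟦(1 : ℤ)⟧),
    (Triangle.mk f g h ∈ distTriang T) →
    S A → S B → S M
  summand_closed : ∀ {A M : T} (i : A ⟶ M) (p : M ⟶ A), i ≫ p = 𝟙 A → S M → S A

/-- Membership in `Thick(X)`, the smallest thick triangulated subcategory containing `X`. -/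
def triThickClosure (X : T → Prop) (M : T) : Prop :=
  ∀ S : T → Prop, IsThickTriSub S → (∀ N, X N → S N) → S M

lemma desuspension_distinguished (M : T) :
    ∃ (f : M⟦(-1 : ℤ)⟧ ⟶ (0 : T)) (g : (0 : T) ⟶ M) (h : M ⟶ M⟦(-1 : ℤ)⟧⟦(1 : ℤ)⟧),
      Triangle.mk f g h ∈ distTriang T :=
  ⟨_, _, _, inv_rot_of_distTriang _ (contractible_distinguished₁ M)⟩

section

variable {X W : T → Prop}

lemma TriLeftFrobenius.shift_add (hF : TriLeftFrobenius X W) (M : T) {a b c : ℤ} (h : a + b = c) :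
    X (M⟦a⟧⟦b⟧) ↔ X (M⟦c⟧) :=
  ⟨hF.subX.iso_closed ((shiftFunctorAdd' T a b c h).symm.app M),
    hF.subX.iso_closed ((shiftFunctorAdd' T a b c h).app M)⟩

lemma TriLeftFrobenius.shift_zero (hF : TriLeftFrobenius X W) (M : T) : X (M⟦(0 : ℤ)⟧) ↔ X M :=
  ⟨hF.subX.iso_closed ((shiftFunctorZero T ℤ).app M),
    hF.subX.iso_closed ((shiftFunctorZero T ℤ).symm.app M)⟩

/-- `X` is closed under negative shifts, since `M⟦-1⟧` is the cocone of `0 ⟶ M`. -/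
lemma TriLeftFrobenius.shift_neg (hF : TriLeftFrobenius X W) {M : T} (hM : X M) (n : ℕ) :
    X (M⟦-(n : ℤ)⟧) := by
  induction n with
  | zero => simpa using (hF.shift_zero M).2 hM
  | succ n ih =>
    obtain ⟨f, g, h, hd⟩ := desuspension_distinguished (M⟦-(n : ℤ)⟧)
    exact (hF.shift_add M (by push_cast; ring)).1 (hF.coconeClosed f g h hd hF.subX.zero ih)

lemma TriLeftFrobenius.shift_mono (hF : TriLeftFrobenius X W) {M : T} {a b : ℤ}
    (hab : b ≤ a) (hM : X (M⟦a⟧)) : X (M⟦b⟧) := by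
  obtain ⟨n, hn⟩ := Int.eq_ofNat_of_zero_le (sub_nonneg.2 hab)
  exact (hF.shift_add M (by omega)).1 (hF.shift_neg hM n)

/-- Extension closure of `X⟦-a⟧`, applied to the rotated triangle `B ⟶ M ⟶ A⟦1⟧`. -/
lemma TriLeftFrobenius.shift_cone (hF : TriLeftFrobenius X W) {A B M : T}
    {f : A ⟶ B} {g : B ⟶ M} {h : M ⟶ A⟦(1 : ℤ)⟧}
    (hd : Triangle.mk f g h ∈ distTriang T) {a b : ℤ} (hab : 1 + a = b)
    (hA : X (A⟦b⟧)) (hB : X (B⟦a⟧)) : X (M⟦a⟧) :=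
  hF.extClosed _ _ _ (Triangle.shift_distinguished _ (rot_of_distTriang _ hd) a) hB
    ((hF.shift_add A hab).2 hA)

/-- `X̂ₙ = X⟦n⟧`. -/
lemma TriLeftFrobenius.triHat_iff (hF : TriLeftFrobenius X W) (n : ℕ) (M : T) :
    TriHat X n M ↔ X (M⟦-(n : ℤ)⟧) := by
  induction n generalizing M with
  | zero => simpa [TriHat] using (hF.shift_zero M).symm
  | succ n ih =>
    constructor
    · rintro ⟨K, E, f, g, h, hd, hE, hK⟩
      exact hF.shift_cone hd (by push_cast; ring) ((ih K).1 hK) (hF.shift_neg hE _)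
    · intro hM
      obtain ⟨f, g, h, hd⟩ := desuspension_distinguished M
      exact ⟨_, _, f, g, h, hd, hF.subX.zero,
        (ih _).2 ((hF.shift_add M (by push_cast; ring)).2 hM)⟩

lemma TriLeftFrobenius.triHatAll_iff (hF : TriLeftFrobenius X W) (M : T) :
    TriHatAll X M ↔ ∃ a : ℤ, X (M⟦a⟧) := by
  constructor
  · rintro ⟨n, hn⟩
    exact ⟨_, (hF.triHat_iff n M).1 hn⟩
  · rintro ⟨a, ha⟩
    exact ⟨a.natAbs, (hF.triHat_iff _ M).2 (hF.shift_mono (by omega) ha)⟩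

end

/-- For a left Frobenius pair `(X, W)` in a triangulated category `T`,
`X̂` is the smallest thick triangulated subcategory of `T` containing `X`. -/
theorem statement16 {T : Type u} [Category.{v} T] [HasZeroObject T] [HasShift T ℤ]
    [Preadditive T] [∀ n : ℤ, (shiftFunctor T n).Additive] [Pretriangulated T]
    (X W : T → Prop) (hF : TriLeftFrobenius X W) :
    IsThickTriSub (TriHatAll X) ∧ (∀ M, X M → TriHatAll X M) ∧
      (∀ S : T → Prop, IsThickTriSub S → (∀ N, X N → S N) →
        ∀ M, TriHatAll X M → S M) := by
  refine ⟨⟨⟨0, hF.subX.zero⟩, ?_, ?_, ?_, ?_⟩, fun M hM => ⟨0, hM⟩, ?_⟩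
  · intro A B e hA
    obtain ⟨a, ha⟩ := (hF.triHatAll_iff A).1 hA
    exact (hF.triHatAll_iff B).2 ⟨a, hF.subX.iso_closed ((shiftFunctor T a).mapIso e) ha⟩
  · intro M n hM
    obtain ⟨a, ha⟩ := (hF.triHatAll_iff M).1 hM
    exact (hF.triHatAll_iff _).2 ⟨a - n, (hF.shift_add M (by ring)).2 ha⟩
  · intro A B M f g h hd hA hB
    obtain ⟨a, ha⟩ := (hF.triHatAll_iff A).1 hA
    obtain ⟨b, hb⟩ := (hF.triHatAll_iff B).1 hB
    exact (hF.triHatAll_iff M).2 ⟨min (a - 1) b, hF.shift_cone hd rfl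
      (hF.shift_mono (by omega) ha) (hF.shift_mono (by omega) hb)⟩
  · intro A M i p hip hM
    obtain ⟨a, ha⟩ := (hF.triHatAll_iff M).1 hM
    refine (hF.triHatAll_iff A).2 ⟨a, hF.subX.summand_closed (i⟦a⟧') (p⟦a⟧') ?_ ha⟩
    rw [← Functor.map_comp, hip, CategoryTheory.Functor.map_id]
  · rintro S hS hXS M ⟨n, hn⟩
    induction n generalizing M with
    | zero => exact hXS M hn
    | succ n ih =>
      obtain ⟨K, E, f, g, h, hd, hE, hK⟩ := hn
      exact hS.ext_closed f g h hd (ih K hK) (hXS E hE)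

end FrobeniusPaperTri
end

section
/- Let T be a triangulated category and let (U, V) be a co-t-structure on the smallest thick triangulated subcategory Thick(U) of T containing U. Then (U, U ∩ V) is a left Frobenius pair in T, and the hull (U ∩ V)^ equals V. -/
/-!
Inside `B = Thick(U)` the two halves of a co-t-structure determine each other: an object of `B`
lies in `U` iff it has no nonzero morphism to any `V[1]`, and in `V` iff no object of `U` has a
nonzero morphism to its shift by `1` (the relevant approximation triangle then splits:
`CoTStructureOn.memU`, `CoTStructureOn.memV`). With the long exact Hom sequences, this shows that
`U` is closed under extensions and cocones, and `V` under extensions, cones and the shift by `1`.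
The left Frobenius pair axioms and the inclusion of the hull of `U ∩ V` in `V` follow directly.

For `V ⊆ (U ∩ V)^`, the objects `M` with `M[-n] ∈ U` for some `n` form a thick subcategory, so
every object of `Thick(U)` is of this form (`CoTStructureOn.exists_shift`). If `M ∈ V`, the middle
term of the triangle `V₀ → U₀ → M → V₀[1]` is in `U ∩ V` by extension closure of `V`, and if
`M[-n-1] ∈ U` then `V₀[-n] ∈ U`, as an extension of `U₀[-n]` by `M[-n-1]`. Induction on `n` gives
a resolution of length `n` (`CoTStructureOn.mem_hat`). The octahedral axiom is not needed.
-/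


open CategoryTheory CategoryTheory.Limits CategoryTheory.Pretriangulated ZeroObject

universe v u

namespace FrobeniusPaperTri

variable {T : Type u} [Category.{v} T] [HasZeroObject T] [HasShift T ℤ] [Preadditive T]
  [∀ n : ℤ, (shiftFunctor T n).Additive] [Pretriangulated T]

/-- A co-t-structure `(U, V)` on a (thick triangulated) subcategory `B` of `T`, where
subcategories are given by their membership predicates. -/
structure CoTStructureOn (B U V : T → Prop) : Prop where
  UsubB : ∀ M, U M → B M
  VsubB : ∀ M, V M → B M
  isoU : ∀ {A B' : T}, (A ≅ B') → U A → U B'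
  summandU : ∀ {A M : T} (i : A ⟶ M) (p : M ⟶ A), i ≫ p = 𝟙 A → U M → U A
  isoV : ∀ {A B' : T}, (A ≅ B') → V A → V B'
  summandV : ∀ {A M : T} (i : A ⟶ M) (p : M ⟶ A), i ≫ p = 𝟙 A → V M → V A
  /-- `U[-1] ⊆ U`. -/
  shiftU : ∀ M : T, U M → U (M⟦(-1 : ℤ)⟧)
  /-- `Hom(U, V[1]) = 0`. -/
  hom_zero : ∀ (M N : T) (f : M ⟶ N⟦(1 : ℤ)⟧), U M → V N → f = 0
  /-- Every `C ∈ B` admits a distinguished triangle `V₀ → U₀ → C → V₀[1]`. -/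
  tri₁ : ∀ M : T, B M → ∃ (V₀ U₀ : T) (f : V₀ ⟶ U₀) (g : U₀ ⟶ M) (h : M ⟶ V₀⟦(1 : ℤ)⟧),
    (Triangle.mk f g h ∈ distTriang T) ∧ U U₀ ∧ V V₀
  /-- Every `C ∈ B` admits a distinguished triangle `C → V₀ → U₀ → C[1]`. -/
  tri₂ : ∀ M : T, B M → ∃ (V₀ U₀ : T) (f : M ⟶ V₀) (g : V₀ ⟶ U₀) (h : U₀ ⟶ M⟦(1 : ℤ)⟧),
    (Triangle.mk f g h ∈ distTriang T) ∧ U U₀ ∧ V V₀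

lemma thick_triThickClosure (U : T → Prop) : IsThickTriSub (triThickClosure U) where
  zero := fun _ hS _ => hS.zero
  iso_closed := fun e h S hS hU => hS.iso_closed e (h S hS hU)
  shift_closed := fun M n h S hS hU => hS.shift_closed M n (h S hS hU)
  ext_closed := fun _ _ _ f g k hT h₁ h₂ S hS hU =>
    hS.ext_closed f g k hT (h₁ S hS hU) (h₂ S hS hU)
  summand_closed := fun i p hip h S hS hU => hS.summand_closed i p hip (h S hS hU)

/-- The defining closure under cones gives closure under extensions, by rotating backwards. -/
lemma IsThickTriSub.ext {S : T → Prop} (hS : IsThickTriSub S) {A B M : T} {f : A ⟶ B} {g : B ⟶ M}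
    {h : M ⟶ A⟦(1 : ℤ)⟧} (hT : Triangle.mk f g h ∈ distTriang T) (hA : S A) (hM : S M) : S B :=
  hS.ext_closed _ _ _ (inv_rot_of_distTriang _ hT) (hS.shift_closed M (-1) hM) hA

namespace CoTStructureOn

variable {U V : T → Prop}

/-- An object of `Thick(U)` left orthogonal to `V[1]` is in `U`: it is a retract of the term `U₀`
of its approximation triangle. -/
lemma memU (hco : CoTStructureOn (triThickClosure U) U V) {M : T} (hM : triThickClosure U M)
    (h : ∀ N, V N → ∀ f : M ⟶ N⟦(1 : ℤ)⟧, f = 0) : U M := by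
  obtain ⟨V₀, U₀, f, g, k, hT, hU, hV⟩ := hco.tri₁ M hM
  obtain ⟨s, hs⟩ := Triangle.coyoneda_exact₃ _ hT (𝟙 M) ((Category.id_comp k).trans (h _ hV k))
  exact hco.summandU s g hs.symm hU

/-- An object `M` of `Thick(U)` with `Hom(U, M[1]) = 0` is in `V`: it is a retract of the term `V₀`
of its approximation triangle. -/
lemma memV (hco : CoTStructureOn (triThickClosure U) U V) {M : T} (hM : triThickClosure U M)
    (h : ∀ X, U X → ∀ f : X ⟶ M⟦(1 : ℤ)⟧, f = 0) : V M := by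
  obtain ⟨V₀, U₀, f, g, k, hT, hU, hV⟩ := hco.tri₂ M hM
  have h₀ : (Triangle.mk f g k).invRotate.mor₁ = 0 := by
    change -(shiftFunctor T (-1 : ℤ)).map k ≫ (shiftFunctorCompIsoId T (1 : ℤ) (-1) _).hom.app M = 0
    rw [h _ hU k, Functor.map_zero, zero_comp, neg_zero]
  obtain ⟨s, hs⟩ := Triangle.yoneda_exact₂ _ (inv_rot_of_distTriang _ hT) (𝟙 M)
    ((Category.comp_id _).trans h₀)
  exact hco.summandV f s hs.symm hV

lemma zeroU (hco : CoTStructureOn (triThickClosure U) U V) : U 0 :=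
  hco.memU (thick_triThickClosure U).zero fun _ _ f => (isZero_zero T).eq_of_src f 0

lemma zeroV (hco : CoTStructureOn (triThickClosure U) U V) : V 0 :=
  hco.memV (thick_triThickClosure U).zero fun _ _ f =>
    ((shiftFunctor T (1 : ℤ)).map_isZero (isZero_zero T)).eq_of_tgt f 0

lemma extU (hco : CoTStructureOn (triThickClosure U) U V) {A B M : T} {f : A ⟶ B} {g : B ⟶ M}
    {h : M ⟶ A⟦(1 : ℤ)⟧} (hT : Triangle.mk f g h ∈ distTriang T) (hA : U A) (hM : U M) : U B := by
  refine hco.memU ((thick_triThickClosure U).ext hT (hco.UsubB _ hA) (hco.UsubB _ hM)) ?_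
  intro N hN k
  obtain ⟨l, hl⟩ := Triangle.yoneda_exact₂ _ hT k (hco.hom_zero _ _ _ hA hN)
  rw [hl]
  exact (congrArg (g ≫ ·) (hco.hom_zero _ _ l hM hN)).trans comp_zero

/-- In a triangle `A → B → M → A[1]`, the object `A` is an extension of `B` by `M[-1]`. -/
lemma coconeU (hco : CoTStructureOn (triThickClosure U) U V) {A B M : T} {f : A ⟶ B} {g : B ⟶ M}
    {h : M ⟶ A⟦(1 : ℤ)⟧} (hT : Triangle.mk f g h ∈ distTriang T) (hB : U B) (hM : U M) : U A :=
  hco.extU (inv_rot_of_distTriang _ hT) (hco.shiftU _ hM) hB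

lemma shiftV (hco : CoTStructureOn (triThickClosure U) U V) {M : T} (hM : V M) :
    V (M⟦(1 : ℤ)⟧) := by
  refine hco.memV ((thick_triThickClosure U).shift_closed _ _ (hco.VsubB _ hM)) ?_
  intro X hX f
  apply (shiftFunctor T (-1 : ℤ)).map_injective
  have h0 := hco.hom_zero _ _ ((shiftFunctor T (-1 : ℤ)).map f ≫
    (shiftFunctorCompIsoId T (1 : ℤ) (-1) (by simp)).hom.app (M⟦(1 : ℤ)⟧)) (hco.shiftU _ hX) hM
  rw [Functor.map_zero]
  exact (cancel_mono ((shiftFunctorCompIsoId T (1 : ℤ) (-1) (by simp)).hom.app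
    (M⟦(1 : ℤ)⟧))).1 (h0.trans zero_comp.symm)

lemma hom_zero_shift (hco : CoTStructureOn (triThickClosure U) U V) {M N : T} (hM : U M) (hN : V N)
    (n : ℕ) (f : M ⟶ N⟦((n : ℤ) + 1)⟧) : f = 0 := by
  have key : ∀ n : ℕ, V (N⟦(n : ℤ)⟧) := by
    intro n
    induction n with
    | zero => exact hco.isoV ((shiftFunctorZero T ℤ).symm.app N) hN
    | succ n ih =>
      exact hco.isoV ((shiftFunctorAdd' T (n : ℤ) 1 _ (by simp)).symm.app N) (hco.shiftV ih)
  have h0 := hco.hom_zero _ _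
    (f ≫ (shiftFunctorAdd T (n : ℤ) 1).hom.app N) hM (key n)
  exact (cancel_mono ((shiftFunctorAdd T (n : ℤ) 1).hom.app N)).1 (h0.trans zero_comp.symm)

lemma extV (hco : CoTStructureOn (triThickClosure U) U V) {A B M : T} {f : A ⟶ B} {g : B ⟶ M}
    {h : M ⟶ A⟦(1 : ℤ)⟧} (hT : Triangle.mk f g h ∈ distTriang T) (hA : V A) (hM : V M) : V B := by
  refine hco.memV ((thick_triThickClosure U).ext hT (hco.VsubB _ hA) (hco.VsubB _ hM)) ?_
  intro X hX k
  obtain ⟨l, hl⟩ := Triangle.coyoneda_exact₂ _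
    (rot_of_distTriang _ (rot_of_distTriang _ (rot_of_distTriang _ hT))) k
    (hco.hom_zero _ _ _ hX hM)
  rw [hl]
  exact (congrArg (· ≫ (Triangle.mk f g h).rotate.rotate.rotate.mor₁)
    (hco.hom_zero _ _ l hX hA)).trans zero_comp

lemma coneV (hco : CoTStructureOn (triThickClosure U) U V) {A B M : T} {f : A ⟶ B} {g : B ⟶ M}
    {h : M ⟶ A⟦(1 : ℤ)⟧} (hT : Triangle.mk f g h ∈ distTriang T) (hA : V A) (hB : V B) : V M :=
  hco.extV (rot_of_distTriang _ hT) hB (hco.shiftV hA)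

lemma extU_shift (hco : CoTStructureOn (triThickClosure U) U V) {A B M : T} {f : A ⟶ B} {g : B ⟶ M}
    {h : M ⟶ A⟦(1 : ℤ)⟧} (hT : Triangle.mk f g h ∈ distTriang T) (k : ℤ) (hA : U (A⟦k⟧))
    (hM : U (M⟦k⟧)) : U (B⟦k⟧) :=
  hco.extU (Triangle.shift_distinguished _ hT k) hA hM

lemma shiftU_le (hco : CoTStructureOn (triThickClosure U) U V) {M : T} {k l : ℤ} (hlk : l ≤ k)
    (hM : U (M⟦k⟧)) : U (M⟦l⟧) := by
  obtain ⟨n, rfl⟩ : ∃ n : ℕ, l = k - n := ⟨(k - l).toNat, by omega⟩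
  clear hlk
  induction n with
  | zero => simpa using hM
  | succ n ih =>
    exact hco.isoU ((shiftFunctorAdd' T (k - n) (-1) _ (by push_cast; ring)).symm.app M)
      (hco.shiftU _ ih)

/-- Every object of `Thick(U)` lies in some `U[n]`, since the union of the `U[n]` is thick. -/
lemma exists_shift (hco : CoTStructureOn (triThickClosure U) U V) {M : T}
    (hM : triThickClosure U M) : ∃ n : ℕ, U (M⟦-(n : ℤ)⟧) := by
  suffices h : ∃ k : ℤ, U (M⟦k⟧) by
    obtain ⟨k, hk⟩ := h
    exact ⟨(-k).toNat, hco.shiftU_le (by omega) hk⟩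
  refine hM (fun M => ∃ k : ℤ, U (M⟦k⟧)) ?_
    fun N hN => ⟨0, hco.isoU ((shiftFunctorZero T ℤ).symm.app N) hN⟩
  constructor
  · exact ⟨0, hco.isoU ((shiftFunctorZero T ℤ).symm.app 0) hco.zeroU⟩
  · rintro A B e ⟨k, hk⟩
    exact ⟨k, hco.isoU ((shiftFunctor T k).mapIso e) hk⟩
  · rintro M n ⟨k, hk⟩
    exact ⟨k - n, hco.isoU ((shiftFunctorAdd' T n (k - n) k (by ring)).app M) hk⟩
  · rintro A B M f g h hT ⟨k, hk⟩ ⟨l, hl⟩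
    -- For `m = min k l`, the triangle `B → M → A[1]` shifted by `m - 1` exhibits `M[m-1]` as an
    -- extension of `A[1][m-1] ≅ A[m]` by `B[m-1]`.
    refine ⟨min k l - 1, hco.extU_shift (rot_of_distTriang _ hT) _
      (hco.shiftU_le (by omega) hl) ?_⟩
    exact hco.isoU ((shiftFunctorAdd' T 1 (min k l - 1) (min k l) (by ring)).app A)
      (hco.shiftU_le (by omega) hk)
  · rintro A M i p hip ⟨k, hk⟩
    exact ⟨k, hco.summandU ((shiftFunctor T k).map i) ((shiftFunctor T k).map p)
      (by rw [← Functor.map_comp, hip, CategoryTheory.Functor.map_id]) hk⟩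

lemma hat_subset (hco : CoTStructureOn (triThickClosure U) U V) (n : ℕ) :
    ∀ M, TriHat (fun A => U A ∧ V A) n M → V M := by
  induction n with
  | zero => exact fun M h => h.2
  | succ n ih =>
    rintro M ⟨K, E, f, g, h, hT, hE, hK⟩
    exact hco.coneV hT (ih K hK) hE.2

/-- Every object of `V ∩ U[n]` has a `U ∩ V`-resolution of length `n`. -/
lemma mem_hat (hco : CoTStructureOn (triThickClosure U) U V) (n : ℕ) :
    ∀ M, V M → U (M⟦-(n : ℤ)⟧) → TriHat (fun A => U A ∧ V A) n M := by
  induction n with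
  | zero =>
    exact fun M hV hU =>
      ⟨hco.isoU ((shiftFunctorZero' T (-((0 : ℕ) : ℤ)) (by simp)).app M) hU, hV⟩
  | succ n ih =>
    intro M hV hU
    obtain ⟨V₀, U₀, f, g, h, hT, hU₀, hV₀⟩ := hco.tri₁ M (hco.VsubB _ hV)
    refine ⟨V₀, U₀, f, g, h, hT, ⟨hU₀, hco.extV hT hV₀ hV⟩, ih V₀ hV₀ ?_⟩
    refine hco.extU_shift (inv_rot_of_distTriang _ hT) _ ?_ ?_
    · exact hco.isoU ((shiftFunctorAdd' T (-1) (-(n : ℤ)) _ (by push_cast; ring)).app M) hU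
    · exact hco.shiftU_le (k := 0) (by omega)
        (hco.isoU ((shiftFunctorZero T ℤ).symm.app U₀) hU₀)

end CoTStructureOn

/-- If `(U, V)` is a co-t-structure on `Thick(U)`, then `(U, U ∩ V)` is a
left Frobenius pair in `T` and `(U ∩ V)^ = V`. -/
theorem statement18 {T : Type u} [Category.{v} T] [HasZeroObject T] [HasShift T ℤ]
    [Preadditive T] [∀ n : ℤ, (shiftFunctor T n).Additive] [Pretriangulated T]
    (U V : T → Prop) (hco : CoTStructureOn (triThickClosure U) U V) :
    TriLeftFrobenius U (fun M => U M ∧ V M) ∧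
      (∀ M, TriHatAll (fun A => U A ∧ V A) M ↔ V M) := by
  exact ⟨{
    subX := ⟨hco.zeroU, hco.isoU, hco.summandU⟩
    subW := ⟨⟨hco.zeroU, hco.zeroV⟩, fun e h => ⟨hco.isoU e h.1, hco.isoV e h.2⟩,
      fun i p hip h => ⟨hco.summandU i p hip h.1, hco.summandV i p hip h.2⟩⟩
    extClosed := fun _ _ _ _ _ _ hT => hco.extU hT
    coconeClosed := fun _ _ _ _ _ _ hT => hco.coconeU hT
    WsubX := fun _ h => h.1
    cogen := fun M hM => by
      obtain ⟨V₀, U₀, f, g, h, hT, hU, hV⟩ := hco.tri₂ M (hco.UsubB _ hM)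
      exact ⟨V₀, U₀, f, g, h, hT, ⟨hco.extU hT hM hU, hV⟩, hU⟩
    perp := fun M N hM hN i hi f => by
      obtain ⟨n, rfl⟩ : ∃ n : ℕ, i = n + 1 := ⟨(i - 1).toNat, by omega⟩
      exact hco.hom_zero_shift hM hN.2 n f }, fun M =>
    ⟨fun ⟨n, h⟩ => hco.hat_subset n M h, fun h => by
      obtain ⟨n, hn⟩ := hco.exists_shift (hco.VsubB _ h)
      exact ⟨n, hco.mem_hat n M h hn⟩⟩⟩

end FrobeniusPaperTri
end
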